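/- arXiv:1103.3401 — 3 statements merged into one kernel-verified Lean document; each statement's English description precedes it below -/
import Mathlib

section
/- Let (X,d) be a proper complete separable metric space with base point x0, let 1 <= p < infinity, and let f: X -> X be continuous. Then the pushforward f_* maps P_p(X) into itself and is continuous as a map (P_p(X), w_p) -> (P_p(X), w_p) if and only if sup over x in X of d(f(x), x0) / (1 + d(x, x0)) is finite. -/
open MeasureTheory Topology Filter Metric Set
open scoped ENNReal NNReal

noncomputable section

variable {X : Type*}

/-- `π` is a coupling of `μ` and `ν`, i.e. a measure on `X × X` with marginals `μ` and `ν`. -/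
def IsCoupling [MeasurableSpace X] (π : Measure (X × X)) (μ ν : Measure X) : Prop :=
  π.map Prod.fst = μ ∧ π.map Prod.snd = ν

/-- The `p`-th power optimal transport cost between `μ` and `ν`. -/
def wCost [MetricSpace X] [MeasurableSpace X] (p : ℝ) (μ ν : Measure X) : ℝ≥0∞ :=
  ⨅ π ∈ {π : Measure (X × X) | IsProbabilityMeasure π ∧ IsCoupling π μ ν},
    ∫⁻ q, ENNReal.ofReal (dist q.1 q.2 ^ p) ∂π

/-- The Wasserstein distance of order `p` (the `p`-th root of the optimal cost), as a real
number. -/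
def Wp [MetricSpace X] [MeasurableSpace X] (p : ℝ) (μ ν : Measure X) : ℝ :=
  ((wCost p μ ν) ^ (1 / p)).toReal

/-- `μ` has finite `p`-th moment about the base point `x₀`. -/
def FiniteMoment [MetricSpace X] [MeasurableSpace X] (p : ℝ) (x₀ : X) (μ : Measure X) : Prop :=
  ∫⁻ x, ENNReal.ofReal (dist x₀ x ^ p) ∂μ < ⊤

/-- The Wasserstein space `P_p(X)`: Borel probability measures with finite `p`-th moment. -/
def Pp [MetricSpace X] [MeasurableSpace X] (p : ℝ) (x₀ : X) : Set (Measure X) :=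
  {μ | IsProbabilityMeasure μ ∧ FiniteMoment p x₀ μ}

/-- The convex combination `t • μ + (1 - t) • ν` of two measures. -/
def mix [MeasurableSpace X] (t : ℝ) (μ ν : Measure X) : Measure X :=
  ENNReal.ofReal t • μ + ENNReal.ofReal (1 - t) • ν

/-- `μₙ → μ` in the weak topology: integrals of bounded continuous functions converge. -/
def WeakConv [MeasurableSpace X] [TopologicalSpace X] (μs : ℕ → Measure X) (μ : Measure X) :
    Prop :=
  ∀ g : BoundedContinuousFunction X ℝ,
    Tendsto (fun n => ∫ x, g x ∂(μs n)) atTop (𝓝 (∫ x, g x ∂μ))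

/-- `μₙ → μ` with respect to the Wasserstein distance of order `p`. -/
def WpTendsto [MetricSpace X] [MeasurableSpace X] (p : ℝ) (μs : ℕ → Measure X)
    (μ : Measure X) : Prop :=
  Tendsto (fun n => Wp p (μs n) μ) atTop (𝓝 0)

/-- A set of measures is sequentially compact for the Wasserstein distance of order `p`. -/
def WpSeqCompact [MetricSpace X] [MeasurableSpace X] (p : ℝ) (S : Set (Measure X)) : Prop :=
  ∀ μs : ℕ → Measure X, (∀ n, μs n ∈ S) →
    ∃ μ ∈ S, ∃ φ : ℕ → ℕ, StrictMono φ ∧ WpTendsto p (fun n => μs (φ n)) μ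

/-- A set of measures is sequentially compact for the weak topology. -/
def WeakSeqCompact [MeasurableSpace X] [TopologicalSpace X] (S : Set (Measure X)) : Prop :=
  ∀ μs : ℕ → Measure X, (∀ n, μs n ∈ S) →
    ∃ μ ∈ S, ∃ φ : ℕ → ℕ, StrictMono φ ∧ WeakConv (fun n => μs (φ n)) μ

/-! Pushing a coupling of `ν` and `μ` forward by `f` gives, for every `K`, the transport estimate
`wCost p (f_* ν) (f_* μ) ≤ ∫ costExcess p f K dμ + K * wCost p ν μ`. As `K → ∞` the cost excess
tends to `0` pointwise, because `f` is continuous at the target point and grows at most linearly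
away from it. The growth bound also dominates it by a multiple of `1 + d(·, x₀) ^ p`, so its
integral against the fixed limit `μ` tends to `0`, which gives `w_p`-continuity. Conversely, without
a growth bound some discrete measure has a finite `p`-th moment while its image does not. -/

section Coupling

theorem isCoupling_prod [MeasurableSpace X] (μ ν : Measure X) [IsProbabilityMeasure μ]
    [IsProbabilityMeasure ν] : IsCoupling (μ.prod ν) μ ν := by
  simp [IsCoupling, Measure.map_fst_prod, Measure.map_snd_prod]

namespace IsCoupling

variable [MeasurableSpace X] {π : Measure (X × X)} {μ ν : Measure X}

theorem lintegral_comp_fst (h : IsCoupling π μ ν) {g : X → ℝ≥0∞} (hg : Measurable g) :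
    ∫⁻ q, g q.1 ∂π = ∫⁻ x, g x ∂μ := by
  rw [← h.1, lintegral_map hg measurable_fst]

theorem lintegral_comp_snd (h : IsCoupling π μ ν) {g : X → ℝ≥0∞} (hg : Measurable g) :
    ∫⁻ q, g q.2 ∂π = ∫⁻ x, g x ∂ν := by
  rw [← h.2, lintegral_map hg measurable_snd]

theorem map {Y : Type*} [MeasurableSpace Y] (h : IsCoupling π μ ν) {f : X → Y}
    (hf : Measurable f) : IsCoupling (π.map (Prod.map f f)) (μ.map f) (ν.map f) := by
  have hff : Measurable (Prod.map f f) := hf.prodMap hf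
  constructor
  · rw [← h.1, Measure.map_map measurable_fst hff, Measure.map_map hf measurable_fst]
    rfl
  · rw [← h.2, Measure.map_map measurable_snd hff, Measure.map_map hf measurable_snd]
    rfl

end IsCoupling

end Coupling

section Wasserstein

variable {p : ℝ}

theorem ofReal_dist_rpow [PseudoMetricSpace X] (hp : 0 ≤ p) (x y : X) :
    ENNReal.ofReal (dist x y ^ p) = edist x y ^ p := by
  rw [edist_dist, ENNReal.ofReal_rpow_of_nonneg dist_nonneg hp]

theorem edist_rpow_le_two_rpow_mul_add [PseudoEMetricSpace X] (hp : 0 ≤ p) (x y z : X) :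
    edist x z ^ p ≤ 2 ^ p * (edist x y ^ p + edist y z ^ p) :=
  (ENNReal.rpow_le_rpow (edist_triangle x y z) hp).trans
    (ENNReal.add_rpow_le_two_rpow_mul_rpow_add_rpow _ _ hp)

theorem measurable_edist_const_rpow [PseudoEMetricSpace X] [MeasurableSpace X]
    [OpensMeasurableSpace X] (p : ℝ) (x₀ : X) : Measurable fun x : X => edist x x₀ ^ p :=
  measurable_edist_left.pow_const p

variable [MetricSpace X] [MeasurableSpace X]

theorem mem_Pp_iff (hp : 0 ≤ p) {x₀ : X} {μ : Measure X} :
    μ ∈ Pp p x₀ ↔ IsProbabilityMeasure μ ∧ ∫⁻ x, edist x x₀ ^ p ∂μ ≠ ∞ := by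
  simp only [Pp, FiniteMoment, mem_ofPred_eq, ofReal_dist_rpow hp, edist_comm x₀, lt_top_iff_ne_top]

theorem wCost_le_lintegral (hp : 0 ≤ p) {μ ν : Measure X} {π : Measure (X × X)}
    [hπ : IsProbabilityMeasure π] (h : IsCoupling π μ ν) :
    wCost p μ ν ≤ ∫⁻ q, edist q.1 q.2 ^ p ∂π := by
  simp only [wCost, ofReal_dist_rpow hp]
  exact iInf₂_le π ⟨hπ, h⟩

theorem exists_isCoupling_lintegral_lt (hp : 0 ≤ p) {μ ν : Measure X} {c : ℝ≥0∞}
    (h : wCost p μ ν < c) :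
    ∃ π : Measure (X × X), IsProbabilityMeasure π ∧ IsCoupling π μ ν ∧
      ∫⁻ q, edist q.1 q.2 ^ p ∂π < c := by
  simpa only [wCost, iInf_lt_iff, mem_ofPred_eq, ofReal_dist_rpow hp, exists_prop, and_assoc]
    using h

theorem wCost_ne_top [OpensMeasurableSpace X] (hp : 0 ≤ p) {x₀ : X} {μ ν : Measure X}
    (hμ : μ ∈ Pp p x₀) (hν : ν ∈ Pp p x₀) : wCost p μ ν ≠ ∞ := by
  obtain ⟨_, hμ⟩ := (mem_Pp_iff hp).1 hμ
  obtain ⟨_, hν⟩ := (mem_Pp_iff hp).1 hν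
  have hm := measurable_edist_const_rpow p x₀
  have hcoup := isCoupling_prod μ ν
  refine ne_top_of_le_ne_top ?_ <|
    calc wCost p μ ν
      _ ≤ ∫⁻ q, edist q.1 q.2 ^ p ∂μ.prod ν := wCost_le_lintegral hp hcoup
      _ ≤ ∫⁻ q, 2 ^ p * (edist q.1 x₀ ^ p + edist q.2 x₀ ^ p) ∂μ.prod ν := by
        gcongr with q
        simpa only [edist_comm x₀] using edist_rpow_le_two_rpow_mul_add hp q.1 x₀ q.2
      _ = 2 ^ p * (∫⁻ x, edist x x₀ ^ p ∂μ + ∫⁻ x, edist x x₀ ^ p ∂ν) := by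
        rw [lintegral_const_mul' _ _ (by finiteness),
          lintegral_add_left (by fun_prop), hcoup.lintegral_comp_fst hm,
          hcoup.lintegral_comp_snd hm]
  finiteness

theorem wpTendsto_iff_tendsto_wCost (hp : 0 < p) {μs : ℕ → Measure X} {μ : Measure X}
    (h : ∀ n, wCost p (μs n) μ ≠ ∞) :
    WpTendsto p μs μ ↔ Tendsto (fun n => wCost p (μs n) μ) atTop (𝓝 0) := by
  have hp' : 0 < 1 / p := by positivity
  let root := (ENNReal.orderIsoRpow (1 / p) hp').toHomeomorph
  have hroot_zero : root 0 = 0 := ENNReal.zero_rpow_of_pos hp'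
  calc WpTendsto p μs μ
    _ ↔ Tendsto (fun n => root (wCost p (μs n) μ)) atTop (𝓝 0) :=
      ENNReal.tendsto_toReal_zero_iff fun n => ENNReal.rpow_ne_top_of_nonneg hp'.le (h n)
    _ ↔ Tendsto (fun n => wCost p (μs n) μ) atTop (𝓝 0) := by
      simpa only [hroot_zero, Function.comp_def] using
        (root.isInducing.tendsto_nhds_iff (f := fun n => wCost p (μs n) μ) (y := 0)).symm

end Wasserstein

section Growth

theorem lintegral_ne_top_of_forall_isProbabilityMeasure [MeasurableSpace X] {u v : X → ℝ≥0∞}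
    (h : ∀ μ : Measure X, IsProbabilityMeasure μ → ∫⁻ x, u x ∂μ ≠ ∞ → ∫⁻ x, v x ∂μ ≠ ∞)
    {μ : Measure X} [IsFiniteMeasure μ] (hu : ∫⁻ x, u x ∂μ ≠ ∞) : ∫⁻ x, v x ∂μ ≠ ∞ := by
  rcases eq_zero_or_neZero μ with rfl | _
  · simp
  · have hv := h ((μ univ)⁻¹ • μ) inferInstance <| by
      rw [lintegral_smul_measure]
      exact ENNReal.mul_ne_top (by simp [NeZero.ne]) hu
    contrapose! hv
    simp [lintegral_smul_measure, hv, ENNReal.mul_top]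

/- If no `C` works, pick points `x n` with `2 ^ n * (1 + u (x n)) < v (x n)`: the point masses
`2⁻¹ ^ n / (1 + u (x n))` at `x n` have finite `1 + u`-integral, but each one contributes at least
`1` to the integral of `v`. -/
theorem exists_le_mul_one_add_of_lintegral_ne_top [MeasurableSpace X] [MeasurableSingletonClass X]
    {u v : X → ℝ≥0∞} (hu : ∀ x, u x ≠ ∞)
    (h : ∀ μ : Measure X, IsProbabilityMeasure μ → ∫⁻ x, u x ∂μ ≠ ∞ → ∫⁻ x, v x ∂μ ≠ ∞) :
    ∃ C : ℝ≥0, ∀ x, v x ≤ C * (1 + u x) := by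
  by_contra! hcon
  choose x hx using fun n : ℕ => hcon (2 ^ n)
  set w : ℕ → ℝ≥0∞ := fun n => 2⁻¹ ^ n / (1 + u (x n))
  set ν : Measure X := Measure.sum fun n => w n • Measure.dirac (x n)
  have hν (g : X → ℝ≥0∞) : ∫⁻ y, g y ∂ν = ∑' n, w n * g (x n) := by
    simp [ν, lintegral_sum_measure, lintegral_smul_measure]
  have hone_add : ∫⁻ y, (1 + u y) ∂ν = 2 := by
    have hw (n : ℕ) : w n * (1 + u (x n)) = 2⁻¹ ^ n :=
      ENNReal.div_mul_cancel (by simp) (by simp [hu])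
    simp [hν, hw, ENNReal.tsum_geometric]
  have hν_fin : IsFiniteMeasure ν := ⟨by
    calc ν univ = ∫⁻ _, 1 ∂ν := lintegral_one.symm
      _ ≤ ∫⁻ y, (1 + u y) ∂ν := lintegral_mono fun y => le_self_add
      _ < ∞ := by simp [hone_add]⟩
  have hu_int : ∫⁻ y, u y ∂ν ≠ ∞ :=
    ne_top_of_le_ne_top (hone_add.trans_ne (by simp)) (lintegral_mono fun y => le_add_self)
  have hv_term (n : ℕ) : 1 ≤ w n * v (x n) :=
    calc (1 : ℝ≥0∞) = w n * (2 ^ n * (1 + u (x n))) := by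
          rw [mul_left_comm, ENNReal.div_mul_cancel (by simp) (by simp [hu]), ← mul_pow,
            ENNReal.mul_inv_cancel (by simp) (by simp), one_pow]
      _ ≤ w n * v (x n) := by
          gcongr
          exact_mod_cast (hx n).le
  refine lintegral_ne_top_of_forall_isProbabilityMeasure h hu_int ?_
  rw [hν, eq_top_iff, ← ENNReal.tsum_const_eq_top_of_ne_zero (α := ℕ) one_ne_zero]
  exact ENNReal.tsum_le_tsum hv_term

variable {Y : Type*} {p : ℝ} {f : X → Y} {x₀ : X} {y₀ : Y}

theorem div_one_add_dist_le_coe_iff [PseudoMetricSpace X] [PseudoMetricSpace Y] {x x' : X}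
    {y y' : Y} {M : ℝ≥0} :
    dist y y' / (1 + dist x x') ≤ M ↔ edist y y' ≤ M * (1 + edist x x') := by
  rw [div_le_iff₀ (by positivity), edist_nndist, edist_nndist, dist_nndist, dist_nndist]
  norm_cast

theorem exists_div_one_add_dist_le_iff [PseudoMetricSpace X] [PseudoMetricSpace Y] (hp : 0 < p) :
    (∃ M : ℝ, ∀ x, dist (f x) y₀ / (1 + dist x x₀) ≤ M) ↔
      ∃ C : ℝ≥0, ∀ x, edist (f x) y₀ ^ p ≤ C * (1 + edist x x₀ ^ p) := by
  constructor
  · rintro ⟨M, hM⟩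
    refine ⟨M.toNNReal ^ p * 2 ^ p, fun x => ?_⟩
    have hlin : edist (f x) y₀ ≤ M.toNNReal * (1 + edist x x₀) :=
      div_one_add_dist_le_coe_iff.1 ((hM x).trans M.le_coe_toNNReal)
    calc edist (f x) y₀ ^ p
      _ ≤ (M.toNNReal * (1 + edist x x₀)) ^ p := by gcongr
      _ = M.toNNReal ^ p * (1 + edist x x₀) ^ p := ENNReal.mul_rpow_of_nonneg _ _ hp.le
      _ ≤ M.toNNReal ^ p * (2 ^ p * (1 ^ p + edist x x₀ ^ p)) := by
        gcongr
        exact ENNReal.add_rpow_le_two_rpow_mul_rpow_add_rpow _ _ hp.le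
      _ = ↑(M.toNNReal ^ p * 2 ^ p) * (1 + edist x x₀ ^ p) := by
        push_cast [ENNReal.coe_rpow_of_nonneg _ hp.le]
        rw [ENNReal.one_rpow, mul_assoc]
  · rintro ⟨C, hC⟩
    refine ⟨((C * 2) ^ (1 / p) : ℝ≥0), fun x => div_one_add_dist_le_coe_iff.2 ?_⟩
    have hroot : (((C * 2) ^ (1 / p) : ℝ≥0) : ℝ≥0∞) ^ p = C * 2 := by
      rw [← ENNReal.coe_rpow_of_nonneg _ hp.le, ← NNReal.rpow_mul, one_div_mul_cancel hp.ne',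
        NNReal.rpow_one, ENNReal.coe_mul, ENNReal.coe_ofNat]
    rw [← ENNReal.rpow_le_rpow_iff hp, ENNReal.mul_rpow_of_nonneg _ _ hp.le, hroot]
    calc edist (f x) y₀ ^ p
      _ ≤ C * (1 + edist x x₀ ^ p) := hC x
      _ ≤ C * ((1 + edist x x₀) ^ p + (1 + edist x x₀) ^ p) := by
        gcongr
        · exact ENNReal.one_le_rpow le_self_add hp
        · exact le_add_self
      _ = C * 2 * (1 + edist x x₀) ^ p := by ring

theorem exists_edist_map_rpow_le [PseudoEMetricSpace X] [PseudoEMetricSpace Y] (hp : 0 ≤ p)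
    {C : ℝ≥0} (hC : ∀ x, edist (f x) y₀ ^ p ≤ C * (1 + edist x x₀ ^ p)) :
    ∃ A : ℝ≥0, ∀ x y, edist (f x) (f y) ^ p ≤ A * (edist x y ^ p + (1 + edist y x₀ ^ p)) := by
  refine ⟨2 ^ p * C * (2 + 2 ^ p), fun x y => ?_⟩
  set m : ℝ≥0∞ := edist x y ^ p + (1 + edist y x₀ ^ p)
  have hone : 1 ≤ m := le_add_left le_self_add
  have hx : edist x x₀ ^ p ≤ 2 ^ p * m :=
    (edist_rpow_le_two_rpow_mul_add hp x y x₀).trans <| by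
      gcongr
      exact add_le_add le_rfl le_add_self
  have hy : 1 + edist y x₀ ^ p ≤ m := le_add_self
  calc edist (f x) (f y) ^ p
    _ ≤ 2 ^ p * (edist (f x) y₀ ^ p + edist (f y) y₀ ^ p) := by
      simpa only [edist_comm y₀] using edist_rpow_le_two_rpow_mul_add hp (f x) y₀ (f y)
    _ ≤ 2 ^ p * (C * (1 + edist x x₀ ^ p) + C * (1 + edist y x₀ ^ p)) := by
      gcongr <;> exact hC _
    _ ≤ 2 ^ p * (C * (m + 2 ^ p * m) + C * m) := by gcongr
    _ = ↑(2 ^ p * C * (2 + 2 ^ p)) * m := by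
      push_cast [ENNReal.coe_rpow_of_nonneg _ hp]
      ring

end Growth

section CostExcess

variable {Y : Type*} {p : ℝ} {f : X → Y}

/-- The part of the transport cost `edist (f x) (f y) ^ p` into the point `f y` that exceeds `K`
times the cost `edist x y ^ p`, in the worst case over `x` (the subtraction is truncated at `0`).
It is the smallest function of the target point `y` bounding the cost after applying `f` up to
`K` times the original cost. -/
def costExcess [EDist X] [EDist Y] (p : ℝ) (f : X → Y) (K : ℝ≥0) (y : X) : ℝ≥0∞ :=
  ⨆ x, (edist (f x) (f y) ^ p - K * edist x y ^ p)

theorem edist_map_rpow_le_costExcess_add [EDist X] [EDist Y] (p : ℝ) (f : X → Y) (K : ℝ≥0)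
    (x y : X) : edist (f x) (f y) ^ p ≤ costExcess p f K y + K * edist x y ^ p :=
  tsub_le_iff_right.1 (le_iSup (fun x => edist (f x) (f y) ^ p - K * edist x y ^ p) x)

theorem measurable_costExcess [PseudoEMetricSpace X] [PseudoMetricSpace Y] [MeasurableSpace X]
    [OpensMeasurableSpace X] (hp : 0 ≤ p) (hf : Continuous f) (K : ℝ≥0) :
    Measurable (costExcess p f K) := by
  refine (lowerSemicontinuous_iSup fun x => Continuous.lowerSemicontinuous ?_).measurable
  refine continuous_iff_continuousAt.2 fun y => ENNReal.Tendsto.sub ?_ ?_ (Or.inl (by finiteness))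
  · exact (ENNReal.continuous_rpow_const.comp (continuous_const.edist hf)).continuousAt
  · exact ((ENNReal.continuous_const_mul ENNReal.coe_ne_top).comp
      (ENNReal.continuous_rpow_const.comp (continuous_const.edist continuous_id))).continuousAt

theorem costExcess_le [EDist X] [EDist Y] {A K : ℝ≥0} {y : X} {b : ℝ≥0∞}
    (h : ∀ x, edist (f x) (f y) ^ p ≤ A * (edist x y ^ p + b)) (hK : A ≤ K) :
    costExcess p f K y ≤ A * b := by
  refine iSup_le fun x => tsub_le_iff_left.2 ((h x).trans ?_)
  rw [mul_add]
  gcongr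

theorem tendsto_costExcess_atTop [PseudoMetricSpace X] [PseudoEMetricSpace Y] (hp : 0 < p) {y : X}
    (hf : ContinuousAt f y) {A : ℝ≥0} {b : ℝ≥0∞} (hb : b ≠ ∞)
    (h : ∀ x, edist (f x) (f y) ^ p ≤ A * (edist x y ^ p + b)) :
    Tendsto (fun K => costExcess p f K y) atTop (𝓝 0) := by
  refine ENNReal.tendsto_nhds_zero.2 fun ε hε => ?_
  have hcont : Tendsto (fun x => edist (f x) (f y) ^ p) (𝓝 y) (𝓝 0) := by
    simpa [hp] using (hf.edist (continuousAt_const (y := f y))).ennrpow_const p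
  obtain ⟨δ, hδ, hnear⟩ := EMetric.mem_nhds_iff.1 (hcont.eventually_le_const hε)
  have hδp : δ ^ p ≠ 0 := (ENNReal.rpow_pos_of_nonneg hδ hp.le).ne'
  have hL : A * (1 + b / δ ^ p) ≠ ∞ := by finiteness
  filter_upwards [eventually_ge_atTop (A * (1 + b / δ ^ p)).toNNReal] with K hK
  refine iSup_le fun x => ?_
  rcases lt_or_ge (edist x y) δ with hx | hx
  · exact tsub_le_self.trans (hnear hx)
  · have hδ_top : δ ≠ ∞ := ne_top_of_le_ne_top (edist_ne_top x y) hx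
    have hb_le : b ≤ b / δ ^ p * edist x y ^ p :=
      calc b = b / δ ^ p * δ ^ p := (ENNReal.div_mul_cancel hδp (by finiteness)).symm
        _ ≤ b / δ ^ p * edist x y ^ p := by gcongr
    have hfar : edist (f x) (f y) ^ p ≤ K * edist x y ^ p :=
      calc edist (f x) (f y) ^ p ≤ A * (edist x y ^ p + b / δ ^ p * edist x y ^ p) :=
            (h x).trans (by gcongr)
        _ = A * (1 + b / δ ^ p) * edist x y ^ p := by ring
        _ ≤ K * edist x y ^ p := by
            gcongr
            exact ENNReal.coe_toNNReal hL ▸ ENNReal.coe_le_coe.2 hK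
    simp [tsub_eq_zero_of_le hfar]

end CostExcess

section Pushforward

variable {Y : Type*} [MetricSpace X] [MeasurableSpace X] [MetricSpace Y]
  {p : ℝ} {f : X → Y} {x₀ : X} {y₀ : Y}

theorem lintegral_const_mul_one_add_edist_rpow_ne_top (hp : 0 ≤ p) {μ : Measure X}
    (hμ : μ ∈ Pp p x₀) (A : ℝ≥0) : ∫⁻ x, A * (1 + edist x x₀ ^ p) ∂μ ≠ ∞ := by
  obtain ⟨_, hμ⟩ := (mem_Pp_iff hp).1 hμ
  rw [lintegral_const_mul' _ _ ENNReal.coe_ne_top, lintegral_add_left measurable_const]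
  simpa [ENNReal.mul_eq_top] using fun _ => hμ

theorem tendsto_lintegral_costExcess [OpensMeasurableSpace X] (hp : 0 < p) (hf : Continuous f)
    {C : ℝ≥0} (hC : ∀ x, edist (f x) y₀ ^ p ≤ C * (1 + edist x x₀ ^ p)) {μ : Measure X}
    (hμ : μ ∈ Pp p x₀) :
    Tendsto (fun K => ∫⁻ y, costExcess p f K y ∂μ) atTop (𝓝 0) := by
  obtain ⟨A, hA⟩ := exists_edist_map_rpow_le hp.le hC
  rw [← lintegral_zero (μ := μ)]
  refine tendsto_lintegral_filter_of_dominated_convergence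
    (fun y => A * (1 + edist y x₀ ^ p)) ?_ ?_ ?_ ?_
  · exact .of_forall fun K => measurable_costExcess hp.le hf K
  · filter_upwards [eventually_ge_atTop A] with K hK
    exact ae_of_all _ fun y => costExcess_le (hA · y) hK
  · exact lintegral_const_mul_one_add_edist_rpow_ne_top hp.le hμ A
  · exact ae_of_all _ fun y => tendsto_costExcess_atTop hp hf.continuousAt (by finiteness) (hA · y)

variable [MeasurableSpace Y]

theorem map_mem_Pp [OpensMeasurableSpace Y] (hp : 0 ≤ p) (hf : Measurable f) {C : ℝ≥0}
    (hC : ∀ x, edist (f x) y₀ ^ p ≤ C * (1 + edist x x₀ ^ p)) {μ : Measure X}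
    (hμ : μ ∈ Pp p x₀) : μ.map f ∈ Pp p y₀ := by
  have := hμ.1
  refine (mem_Pp_iff hp).2 ⟨Measure.isProbabilityMeasure_map hf.aemeasurable, ?_⟩
  rw [lintegral_map (measurable_edist_const_rpow p y₀) hf]
  exact ne_top_of_le_ne_top (lintegral_const_mul_one_add_edist_rpow_ne_top hp hμ C)
    (lintegral_mono hC)

theorem exists_edist_rpow_le_of_map_mem_Pp [OpensMeasurableSpace X] [OpensMeasurableSpace Y]
    (hp : 0 ≤ p) (hf : Measurable f) (h : ∀ μ ∈ Pp p x₀, μ.map f ∈ Pp p y₀) :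
    ∃ C : ℝ≥0, ∀ x, edist (f x) y₀ ^ p ≤ C * (1 + edist x x₀ ^ p) := by
  refine exists_le_mul_one_add_of_lintegral_ne_top (fun x => by finiteness) fun μ hμ hfin => ?_
  rw [← lintegral_map (measurable_edist_const_rpow p y₀) hf]
  exact ((mem_Pp_iff hp).1 (h μ ((mem_Pp_iff hp).2 ⟨hμ, hfin⟩))).2

theorem wCost_map_le_of_isCoupling [OpensMeasurableSpace X] [BorelSpace Y] (hp : 0 ≤ p)
    (hf : Continuous f) (K : ℝ≥0) {μ ν : Measure X} {π : Measure (X × X)}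
    [IsProbabilityMeasure π] (hπ : IsCoupling π ν μ) :
    wCost p (ν.map f) (μ.map f) ≤
      ∫⁻ y, costExcess p f K y ∂μ + K * ∫⁻ q, edist q.1 q.2 ^ p ∂π := by
  have hff : Measurable (Prod.map f f) := hf.measurable.prodMap hf.measurable
  have hexc : Measurable (costExcess p f K) := measurable_costExcess hp hf K
  have := Measure.isProbabilityMeasure_map (μ := π) hff.aemeasurable
  calc wCost p (ν.map f) (μ.map f)
    _ ≤ ∫⁻ r, edist r.1 r.2 ^ p ∂π.map (Prod.map f f) :=
      wCost_le_lintegral hp (hπ.map hf.measurable)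
    _ ≤ ∫⁻ q, edist (f q.1) (f q.2) ^ p ∂π := lintegral_map_le _ _
    _ ≤ ∫⁻ q, (costExcess p f K q.2 + K * edist q.1 q.2 ^ p) ∂π :=
      lintegral_mono fun q => edist_map_rpow_le_costExcess_add p f K q.1 q.2
    _ = ∫⁻ y, costExcess p f K y ∂μ + K * ∫⁻ q, edist q.1 q.2 ^ p ∂π := by
      rw [lintegral_add_left (by fun_prop), hπ.lintegral_comp_snd hexc,
        lintegral_const_mul' _ _ ENNReal.coe_ne_top]

theorem wCost_map_le [OpensMeasurableSpace X] [BorelSpace Y] (hp : 0 ≤ p) (hf : Continuous f)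
    (K : ℝ≥0) {μ ν : Measure X} (hνμ : wCost p ν μ ≠ ∞) :
    wCost p (ν.map f) (μ.map f) ≤ ∫⁻ y, costExcess p f K y ∂μ + K * wCost p ν μ := by
  have hcont : Continuous fun c : ℝ≥0∞ => ∫⁻ y, costExcess p f K y ∂μ + K * c :=
    continuous_const.add (ENNReal.continuous_const_mul ENNReal.coe_ne_top)
  have : (𝓝[>] wCost p ν μ).NeBot := nhdsGT_neBot_of_exists_gt ⟨∞, hνμ.lt_top⟩
  refine ge_of_tendsto (hcont.continuousWithinAt (s := Ioi (wCost p ν μ)))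
    (eventually_mem_nhdsWithin.mono fun c hc => ?_)
  obtain ⟨π, _, hπ, hπc⟩ := exists_isCoupling_lintegral_lt hp hc
  refine (wCost_map_le_of_isCoupling hp hf K hπ).trans ?_
  gcongr

theorem tendsto_wCost_map [OpensMeasurableSpace X] [BorelSpace Y] (hp : 0 < p)
    (hf : Continuous f) {C : ℝ≥0} (hC : ∀ x, edist (f x) y₀ ^ p ≤ C * (1 + edist x x₀ ^ p))
    {μs : ℕ → Measure X} {μ : Measure X} (hμ : μ ∈ Pp p x₀)
    (h : Tendsto (fun n => wCost p (μs n) μ) atTop (𝓝 0)) :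
    Tendsto (fun n => wCost p ((μs n).map f) (μ.map f)) atTop (𝓝 0) := by
  refine ENNReal.tendsto_nhds_zero.2 fun ε hε => ?_
  have hε2 : 0 < ε / 2 := ENNReal.half_pos hε.ne'
  obtain ⟨K, hK⟩ :=
    ((tendsto_lintegral_costExcess hp hf hC hμ).eventually_le_const hε2).exists
  have hKcost : Tendsto (fun n => K * wCost p (μs n) μ) atTop (𝓝 0) := by
    simpa using ENNReal.Tendsto.const_mul h (Or.inr (ENNReal.coe_ne_top (r := K)))
  filter_upwards [h.eventually_lt_const ENNReal.zero_lt_top, hKcost.eventually_le_const hε2]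
    with n hfin hn
  calc wCost p ((μs n).map f) (μ.map f)
    _ ≤ ∫⁻ y, costExcess p f K y ∂μ + K * wCost p (μs n) μ := wCost_map_le hp.le hf K hfin.ne
    _ ≤ ε / 2 + ε / 2 := add_le_add hK hn
    _ = ε := ENNReal.add_halves ε

end Pushforward

theorem pushforward_wp_continuous_iff_general {Y : Type*}
    [MetricSpace X] [MeasurableSpace X] [OpensMeasurableSpace X]
    [MetricSpace Y] [MeasurableSpace Y] [BorelSpace Y]
    {p : ℝ} (hp : 0 < p) (x₀ : X) (y₀ : Y) {f : X → Y} (hf : Continuous f) :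
    ((∀ μ ∈ Pp p x₀, μ.map f ∈ Pp p y₀) ∧
      (∀ (μs : ℕ → Measure X) (μ : Measure X), (∀ n, μs n ∈ Pp p x₀) → μ ∈ Pp p x₀ →
        WpTendsto p μs μ → WpTendsto p (fun n => (μs n).map f) (μ.map f))) ↔
    ∃ M : ℝ, ∀ x : X, dist (f x) y₀ / (1 + dist x x₀) ≤ M := by
  rw [exists_div_one_add_dist_le_iff hp]
  constructor
  · rintro ⟨hmaps, -⟩
    exact exists_edist_rpow_le_of_map_mem_Pp hp.le hf.measurable hmaps
  · rintro ⟨C, hC⟩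
    have hmaps (μ : Measure X) (hμ : μ ∈ Pp p x₀) : μ.map f ∈ Pp p y₀ :=
      map_mem_Pp hp.le hf.measurable hC hμ
    refine ⟨hmaps, fun μs μ hμs hμ hconv => ?_⟩
    rw [wpTendsto_iff_tendsto_wCost hp fun n => wCost_ne_top hp.le (hμs n) hμ] at hconv
    rw [wpTendsto_iff_tendsto_wCost hp fun n =>
      wCost_ne_top hp.le (hmaps _ (hμs n)) (hmaps _ hμ)]
    exact tendsto_wCost_map hp hf hC hμ hconv

/-- **Characterization of `w_p`-continuity of the transfer map.** For a continuous map
`f : X → X` on a proper complete separable metric space, the pushforward `f_*` maps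
`P_p(X)` into itself and is `w_p`-continuous if and only if
`sup_x d(f(x), x₀)/(1 + d(x, x₀)) < ∞`. -/
theorem pushforward_wp_continuous_iff
    [MetricSpace X] [MeasurableSpace X] [BorelSpace X] [ProperSpace X] [CompleteSpace X]
    [TopologicalSpace.SeparableSpace X]
    (p : ℝ) (hp : 1 ≤ p) (x₀ : X) (f : X → X) (hf : Continuous f) :
    ((∀ μ ∈ Pp p x₀, μ.map f ∈ Pp p x₀) ∧
      (∀ (μs : ℕ → Measure X) (μ : Measure X), (∀ n, μs n ∈ Pp p x₀) → μ ∈ Pp p x₀ →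
        WpTendsto p μs μ → WpTendsto p (fun n => (μs n).map f) (μ.map f))) ↔
    ∃ M : ℝ, ∀ x : X, dist (f x) x₀ / (1 + dist x x₀) ≤ M :=
  pushforward_wp_continuous_iff_general (zero_lt_one.trans_le hp) x₀ x₀ hf
end
end

section
/- Let (X,d) be a proper complete separable metric space with base point x0 and let f: X -> X be continuous such that the pushforward f_* is a w_1-continuous self-map of P_1(X). Suppose there are R_0 >= 0, 0 <= c < 1 and m > 0 such that f^m(B_R(x0)) is contained in B_{cR}(x0) for all R >= R_0, where B_R(x0) denotes the closed ball of radius R around x0. Then every bounded closed subset of (P_1(X), w_1) is f_*-admissible. -/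
open MeasureTheory Topology Filter Metric Set
open scoped ENNReal NNReal

noncomputable section

variable {X : Type*}

/-- A set `N ⊆ P_p(X)` is admissible for a sequence of maps `F n` on measures: whenever
orbit segments `F n^[0..m n] (μs n)` stay in `N` with `m n → ∞`, the endpoints have a
subsequence converging in `(P_p(X), w_p)`. -/
def WpSeqAdmissible [MetricSpace X] [MeasurableSpace X] (p : ℝ) (x₀ : X)
    (F : ℕ → Measure X → Measure X) (N : Set (Measure X)) : Prop :=
  ∀ (μs : ℕ → Measure X) (m : ℕ → ℕ), Tendsto m atTop atTop →
    (∀ n, ∀ k ≤ m n, (F n)^[k] (μs n) ∈ N) →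
    ∃ μ ∈ Pp p x₀, ∃ φ : ℕ → ℕ, StrictMono φ ∧
      WpTendsto p (fun j => (F (φ j))^[m (φ j)] (μs (φ j))) μ

/-- A set `N ⊆ P_p(X)` is `F`-admissible. -/
def WpAdmissible [MetricSpace X] [MeasurableSpace X] (p : ℝ) (x₀ : X)
    (F : Measure X → Measure X) (N : Set (Measure X)) : Prop :=
  WpSeqAdmissible p x₀ (fun _ => F) N

/-- A subset of `P_p(X)` that is (sequentially) closed in `(P_p(X), w_p)`. -/
def WpClosed [MetricSpace X] [MeasurableSpace X] (p : ℝ) (x₀ : X)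
    (N : Set (Measure X)) : Prop :=
  N ⊆ Pp p x₀ ∧ ∀ (μs : ℕ → Measure X) (μ : Measure X), (∀ n, μs n ∈ N) →
    μ ∈ Pp p x₀ → WpTendsto p μs μ → μ ∈ N

/-- A subset of `P_p(X)` that is bounded for `w_p`. -/
def WpBounded [MetricSpace X] [MeasurableSpace X] (p : ℝ) (x₀ : X)
    (N : Set (Measure X)) : Prop :=
  ∃ R : ℝ, ∀ μ ∈ N, Wp p μ (Measure.dirac x₀) ≤ R

/-- The (sequential) closure of a subset of `P_p(X)` in `(P_p(X), w_p)`. -/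
def WpClosure [MetricSpace X] [MeasurableSpace X] (p : ℝ) (x₀ : X)
    (S : Set (Measure X)) : Set (Measure X) :=
  {μ | μ ∈ Pp p x₀ ∧ ∃ μs : ℕ → Measure X, (∀ n, μs n ∈ S) ∧ WpTendsto p μs μ}

/-!
Since `d(f^[m * q] x, x₀) ≤ max R₀ (c ^ q * d(x, x₀))`, the part of the first moment carried by
distances in excess of `R₀` shrinks by a factor `c ^ q` in `m * q` steps. Orbits inside a bounded
set start with bounded first moments, so the excess moments of their endpoints tend to zero.

Bounded first moments give tightness in a proper space, so by Prokhorov's theorem the endpoints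
subconverge weakly, and weak convergence with uniformly small excess moments is `w₁`-convergence:
the mass which both measures have in common on finitely many small cells with null frontier is
moved within the cells, and the small remaining mass `δ` costs at most `2 * r * δ` plus the moments
in excess of `r`.
-/

section Couplings

variable [MeasurableSpace X] {μ ν μ₁ μ₂ ν₁ ν₂ : Measure X} {π π₁ π₂ : Measure (X × X)}

theorem IsCoupling.add (h₁ : IsCoupling π₁ μ₁ ν₁) (h₂ : IsCoupling π₂ μ₂ ν₂) :
    IsCoupling (π₁ + π₂) (μ₁ + μ₂) (ν₁ + ν₂) :=
  ⟨by rw [Measure.map_add _ _ measurable_fst, h₁.1, h₂.1],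
    by rw [Measure.map_add _ _ measurable_snd, h₁.2, h₂.2]⟩

theorem IsCoupling.measure_univ_eq (h : IsCoupling π μ ν) : π univ = μ univ := by
  rw [← h.1, Measure.map_apply measurable_fst .univ, preimage_univ]

theorem IsCoupling.ae_fst (h : IsCoupling π μ ν) {p : X → Prop} (hp : ∀ᵐ x ∂μ, p x) :
    ∀ᵐ q ∂π, p q.1 :=
  ae_of_ae_map measurable_fst.aemeasurable (h.1.symm ▸ hp)

theorem IsCoupling.ae_snd (h : IsCoupling π μ ν) {p : X → Prop} (hp : ∀ᵐ x ∂ν, p x) :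
    ∀ᵐ q ∂π, p q.2 :=
  ae_of_ae_map measurable_snd.aemeasurable (h.2.symm ▸ hp)

theorem IsCoupling.lintegral_fst (h : IsCoupling π μ ν) {g : X → ℝ≥0∞} (hg : Measurable g) :
    ∫⁻ q, g q.1 ∂π = ∫⁻ x, g x ∂μ := by
  rw [← h.1, lintegral_map hg measurable_fst]

theorem IsCoupling.lintegral_snd (h : IsCoupling π μ ν) {g : X → ℝ≥0∞} (hg : Measurable g) :
    ∫⁻ q, g q.2 ∂π = ∫⁻ x, g x ∂ν := by
  rw [← h.2, lintegral_map hg measurable_snd]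

theorem exists_isCoupling_of_measure_univ_eq [IsFiniteMeasure μ] [IsFiniteMeasure ν]
    (h : μ univ = ν univ) : ∃ π, IsCoupling π μ ν := by
  rcases eq_or_ne (μ univ) 0 with hμ | hμ
  · refine ⟨0, ?_, ?_⟩
    · rw [Measure.map_zero, Measure.measure_univ_eq_zero.1 hμ]
    · rw [Measure.map_zero, Measure.measure_univ_eq_zero.1 (h.symm.trans hμ)]
  · have hinv : (μ univ)⁻¹ * μ univ = 1 := ENNReal.inv_mul_cancel hμ (measure_ne_top μ univ)
    refine ⟨(μ univ)⁻¹ • μ.prod ν, ?_, ?_⟩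
    · rw [Measure.map_smul, Measure.map_fst_prod, smul_smul, ← h, hinv, one_smul]
    · rw [Measure.map_smul, Measure.map_snd_prod, smul_smul, hinv, one_smul]

theorem exists_le_measure_univ_eq [IsFiniteMeasure ν] {a : ℝ≥0∞} (ha : a ≤ ν univ) :
    ∃ ν' ≤ ν, ν' univ = a := by
  rcases eq_or_ne (ν univ) 0 with hν | hν
  · exact ⟨ν, le_rfl, by rw [hν, nonpos_iff_eq_zero.1 (ha.trans_eq hν)]⟩
  · refine ⟨(a / ν univ) • ν, Measure.le_iff.2 fun s _ => ?_, ?_⟩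
    · exact mul_le_of_le_one_left' (ENNReal.div_le_of_le_mul (by rwa [one_mul]))
    · exact ENNReal.div_mul_cancel hν (measure_ne_top ν univ)

end Couplings

section TransportCost

/-- The Wasserstein cost of order one between measures of arbitrary mass, so that couplings can be
assembled from couplings of parts. It is `⊤` between measures of different mass. -/
def transportCost [EDist X] [MeasurableSpace X] (μ ν : Measure X) : ℝ≥0∞ :=
  ⨅ (π : Measure (X × X)) (_ : IsCoupling π μ ν), ∫⁻ q, edist q.1 q.2 ∂π

section EDist

variable [EDist X] [MeasurableSpace X]

theorem IsCoupling.transportCost_le {μ ν : Measure X} {π : Measure (X × X)}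
    (h : IsCoupling π μ ν) : transportCost μ ν ≤ ∫⁻ q, edist q.1 q.2 ∂π :=
  iInf₂_le π h

theorem transportCost_add_le (μ₁ μ₂ ν₁ ν₂ : Measure X) :
    transportCost (μ₁ + μ₂) (ν₁ + ν₂) ≤ transportCost μ₁ ν₁ + transportCost μ₂ ν₂ := by
  simp only [transportCost, ENNReal.iInf_add, ENNReal.add_iInf]
  refine le_iInf₂ fun π₂ h₂ => le_iInf₂ fun π₁ h₁ => ?_
  exact (h₁.add h₂).transportCost_le.trans_eq (lintegral_add_measure _ _ _)

theorem transportCost_zero : transportCost (0 : Measure X) 0 = 0 := by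
  have h : IsCoupling (0 : Measure (X × X)) 0 0 := ⟨Measure.map_zero _, Measure.map_zero _⟩
  simpa only [lintegral_zero_measure, nonpos_iff_eq_zero] using h.transportCost_le

theorem transportCost_sum_le {κ : Type*} (s : Finset κ) (μ ν : κ → Measure X) :
    transportCost (∑ i ∈ s, μ i) (∑ i ∈ s, ν i) ≤ ∑ i ∈ s, transportCost (μ i) (ν i) := by
  classical
  induction s using Finset.induction_on with
  | empty => simp only [Finset.sum_empty, transportCost_zero, le_refl]
  | insert i s hi ih =>
    simp only [Finset.sum_insert hi]
    exact (transportCost_add_le _ _ _ _).trans (by gcongr)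

end EDist

theorem transportCost_le_mul_of_ediam_le [PseudoEMetricSpace X] [MeasurableSpace X]
    {μ ν : Measure X} [IsFiniteMeasure μ] [IsFiniteMeasure ν] (hmass : μ univ = ν univ) {S : Set X}
    (hμ : ∀ᵐ x ∂μ, x ∈ S) (hν : ∀ᵐ x ∂ν, x ∈ S) {ε : ℝ≥0∞} (hε : ediam S ≤ ε) :
    transportCost μ ν ≤ ε * μ univ := by
  obtain ⟨π, hπ⟩ := exists_isCoupling_of_measure_univ_eq hmass
  calc transportCost μ ν ≤ ∫⁻ q, edist q.1 q.2 ∂π := hπ.transportCost_le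
    _ ≤ ∫⁻ _, ε ∂π := by
      refine lintegral_mono_ae ?_
      filter_upwards [hπ.ae_fst hμ, hπ.ae_snd hν] with q h₁ h₂
      exact (edist_le_ediam_of_mem h₁ h₂).trans hε
    _ = ε * μ univ := by rw [lintegral_const, hπ.measure_univ_eq]

end TransportCost

section Moments

/-- The first moment of `μ` about `x₀`. -/
def firstMoment [EDist X] [MeasurableSpace X] (x₀ : X) (μ : Measure X) : ℝ≥0∞ :=
  ∫⁻ x, edist x x₀ ∂μ

/-- The part of the first moment of `μ` about `x₀` carried by distances in excess of `r`, the
integral of `(d(x, x₀) - r)⁺`. Compared with the integral of `d(x, x₀)` outside a ball, it has a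
continuous integrand and is therefore lower semicontinuous for weak convergence. -/
def excessMoment [EDist X] [MeasurableSpace X] (x₀ : X) (r : ℝ≥0) (μ : Measure X) : ℝ≥0∞ :=
  ∫⁻ x, (edist x x₀ - r) ∂μ

theorem excessMoment_zero [EDist X] [MeasurableSpace X] (x₀ : X) (μ : Measure X) :
    excessMoment x₀ 0 μ = firstMoment x₀ μ := by
  simp only [excessMoment, firstMoment, ENNReal.coe_zero, tsub_zero]

theorem excessMoment_mono [EDist X] [MeasurableSpace X] {μ ν : Measure X} (h : μ ≤ ν) (x₀ : X)
    (r : ℝ≥0) : excessMoment x₀ r μ ≤ excessMoment x₀ r ν :=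
  lintegral_mono' h le_rfl

theorem firstMoment_le_mul_add_excessMoment [EDist X] [MeasurableSpace X] (x₀ : X) (r : ℝ≥0)
    (μ : Measure X) : firstMoment x₀ μ ≤ r * μ univ + excessMoment x₀ r μ :=
  calc firstMoment x₀ μ ≤ ∫⁻ x, (r + (edist x x₀ - r)) ∂μ := lintegral_mono fun _ => le_add_tsub
    _ = r * μ univ + excessMoment x₀ r μ := by
      rw [lintegral_add_left measurable_const, lintegral_const, excessMoment]

theorem firstMoment_sub_le [EDist X] [MeasurableSpace X] {μ μ' : Measure X} [IsFiniteMeasure μ']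
    (h : μ' ≤ μ) (x₀ : X) (r : ℝ≥0) :
    firstMoment x₀ (μ - μ') ≤ r * (μ univ - μ' univ) + excessMoment x₀ r μ :=
  calc firstMoment x₀ (μ - μ') ≤ r * (μ - μ') univ + excessMoment x₀ r (μ - μ') :=
        firstMoment_le_mul_add_excessMoment x₀ r _
    _ ≤ r * (μ univ - μ' univ) + excessMoment x₀ r μ := by
        rw [Measure.sub_apply .univ h]
        gcongr
        exact excessMoment_mono Measure.sub_le x₀ r

variable [PseudoEMetricSpace X] [MeasurableSpace X] [OpensMeasurableSpace X] {μ ν μ' ν' : Measure X}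

theorem excessMoment_map_le {g : X → X} (hg : Measurable g) {x₀ : X} {r a : ℝ≥0}
    (hle : ∀ x, edist (g x) x₀ ≤ max (r : ℝ≥0∞) (a * edist x x₀)) (μ : Measure X) :
    excessMoment x₀ r (μ.map g) ≤ a * firstMoment x₀ μ := by
  have hm : Measurable fun x => edist x x₀ := by fun_prop
  calc excessMoment x₀ r (μ.map g) = ∫⁻ x, (edist (g x) x₀ - r) ∂μ :=
      lintegral_map (hm.sub_const _) hg
    _ ≤ ∫⁻ x, a * edist x x₀ ∂μ := lintegral_mono fun x =>
      tsub_le_iff_left.2 ((hle x).trans (max_le le_self_add le_add_self))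
    _ = a * firstMoment x₀ μ := lintegral_const_mul _ hm

theorem transportCost_le_firstMoment_add [IsFiniteMeasure μ] [IsFiniteMeasure ν]
    (hmass : μ univ = ν univ) (x₀ : X) :
    transportCost μ ν ≤ firstMoment x₀ μ + firstMoment x₀ ν := by
  have hm : Measurable fun x => edist x x₀ := by fun_prop
  obtain ⟨π, hπ⟩ := exists_isCoupling_of_measure_univ_eq hmass
  calc transportCost μ ν ≤ ∫⁻ q, edist q.1 q.2 ∂π := hπ.transportCost_le
    _ ≤ ∫⁻ q, (edist q.1 x₀ + edist q.2 x₀) ∂π :=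
      lintegral_mono fun _ => edist_triangle_right _ _ _
    _ = ∫⁻ q, edist q.1 x₀ ∂π + ∫⁻ q, edist q.2 x₀ ∂π :=
      lintegral_add_left (f := fun q : X × X => edist q.1 x₀) (hm.comp measurable_fst) _
    _ = firstMoment x₀ μ + firstMoment x₀ ν :=
      congrArg₂ (· + ·) (hπ.lintegral_fst hm) (hπ.lintegral_snd hm)

theorem transportCost_le_add_excessMoment [IsFiniteMeasure μ] [IsFiniteMeasure ν]
    (hmass : μ univ = ν univ) (hμ : μ' ≤ μ) (hν : ν' ≤ ν) (hmass' : μ' univ = ν' univ) (x₀ : X)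
    (r : ℝ≥0) :
    transportCost μ ν ≤ transportCost μ' ν' + 2 * (r * (μ univ - μ' univ)) +
      (excessMoment x₀ r μ + excessMoment x₀ r ν) := by
  have := isFiniteMeasure_of_le μ hμ
  have := isFiniteMeasure_of_le ν hν
  have hmass_sub : (μ - μ') univ = (ν - ν') univ := by
    rw [Measure.sub_apply .univ hμ, Measure.sub_apply .univ hν, hmass, hmass']
  calc transportCost μ ν ≤ transportCost (μ - μ') (ν - ν') + transportCost μ' ν' := by
        simpa only [Measure.sub_add_cancel_of_le hμ, Measure.sub_add_cancel_of_le hν] using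
          transportCost_add_le (μ - μ') μ' (ν - ν') ν'
    _ ≤ firstMoment x₀ (μ - μ') + firstMoment x₀ (ν - ν') + transportCost μ' ν' := by
        gcongr
        exact transportCost_le_firstMoment_add hmass_sub x₀
    _ ≤ (r * (μ univ - μ' univ) + excessMoment x₀ r μ) +
          (r * (ν univ - ν' univ) + excessMoment x₀ r ν) + transportCost μ' ν' := by
        gcongr <;> exact firstMoment_sub_le ‹_› x₀ r
    _ = transportCost μ' ν' + 2 * (r * (μ univ - μ' univ)) +
          (excessMoment x₀ r μ + excessMoment x₀ r ν) := by
        rw [← hmass, ← hmass']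
        ring

end Moments

open scoped Function in
theorem sum_restrict_le [MeasurableSpace X] {κ : Type*} (s : Finset κ) {S : κ → Set X}
    (hS : ∀ i, MeasurableSet (S i)) (hd : Pairwise (Disjoint on S)) (μ : Measure X) :
    ∑ i ∈ s, μ.restrict (S i) ≤ μ := by
  refine Measure.le_iff.2 fun t ht => ?_
  calc (∑ i ∈ s, μ.restrict (S i)) t = ∑ i ∈ s, μ.restrict t (S i) := by
        simp only [Measure.coe_finsetSum, Finset.sum_apply, Measure.restrict_apply ht,
          Measure.restrict_apply (hS _), inter_comm]
    _ ≤ μ.restrict t univ :=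
        sum_measure_le_measure_univ (fun i _ => (hS i).nullMeasurableSet)
          fun i _ j _ hij => (hd hij).aedisjoint
    _ = μ t := Measure.restrict_apply_univ t

section WeakConvergence

open scoped Function

variable [MeasurableSpace X]

theorem exists_le_transportCost_le_of_ediam_le [PseudoEMetricSpace X] {κ : Type*} (s : Finset κ)
    {S : κ → Set X} (hS : ∀ i, MeasurableSet (S i)) (hd : Pairwise (Disjoint on S))
    {ε : ℝ≥0∞} (hε : ∀ i, ediam (S i) ≤ ε) (μ ν : Measure X) [IsFiniteMeasure μ]
    [IsFiniteMeasure ν] :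
    ∃ μ' ≤ μ, ∃ ν' ≤ ν, μ' univ = ∑ i ∈ s, min (μ (S i)) (ν (S i)) ∧ ν' univ = μ' univ ∧
      transportCost μ' ν' ≤ ε * μ univ := by
  have hmass (ρ : Measure X) [IsFiniteMeasure ρ] (i : κ)
      (hρ : min (μ (S i)) (ν (S i)) ≤ ρ (S i)) :
      ∃ ρ' ≤ ρ.restrict (S i), ρ' univ = min (μ (S i)) (ν (S i)) :=
    exists_le_measure_univ_eq (hρ.trans_eq (Measure.restrict_apply_univ _).symm)
  choose α hα_le hα using fun i => hmass μ i (min_le_left _ _)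
  choose β hβ_le hβ using fun i => hmass ν i (min_le_right _ _)
  have hα_sum : ∑ i ∈ s, α i ≤ μ :=
    (Finset.sum_le_sum fun i _ => hα_le i).trans (sum_restrict_le s hS hd μ)
  have hcell (i : κ) : transportCost (α i) (β i) ≤ ε * α i univ := by
    have := isFiniteMeasure_of_le _ (hα_le i)
    have := isFiniteMeasure_of_le _ (hβ_le i)
    exact transportCost_le_mul_of_ediam_le ((hα i).trans (hβ i).symm)
      ((hα_le i).absolutelyContinuous.ae_le (ae_restrict_mem (hS i)))
      ((hβ_le i).absolutelyContinuous.ae_le (ae_restrict_mem (hS i))) (hε i)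
  refine ⟨∑ i ∈ s, α i, hα_sum, ∑ i ∈ s, β i, ?_, ?_, ?_, ?_⟩
  · exact (Finset.sum_le_sum fun i _ => hβ_le i).trans (sum_restrict_le s hS hd ν)
  · simp only [Measure.coe_finsetSum, Finset.sum_apply, hα]
  · simp only [Measure.coe_finsetSum, Finset.sum_apply, hα, hβ]
  · calc transportCost (∑ i ∈ s, α i) (∑ i ∈ s, β i) ≤ ∑ i ∈ s, ε * α i univ :=
          (transportCost_sum_le s α β).trans (Finset.sum_le_sum fun i _ => hcell i)
      _ = ε * (∑ i ∈ s, α i) univ := by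
          rw [← Finset.mul_sum, Measure.coe_finsetSum, Finset.sum_apply]
      _ ≤ ε * μ univ := by gcongr

variable [PseudoMetricSpace X] [OpensMeasurableSpace X]

theorem exists_partition_null_frontier [TopologicalSpace.SeparableSpace X] [Nonempty X]
    (μ : Measure X) [SFinite μ] {ε : ℝ≥0} (hε : 0 < ε) :
    ∃ S : ℕ → Set X, (∀ i, MeasurableSet (S i)) ∧ Pairwise (Disjoint on S) ∧
      ⋃ i, S i = univ ∧ (∀ i, μ (frontier (S i)) = 0) ∧ ∀ i, ediam (S i) ≤ ε := by
  choose r hr hr_null using fun z : X =>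
    exists_null_frontier_thickening μ {z} (show (ε / 4 : ℝ) < ε / 2 by
      linarith [NNReal.coe_pos.2 hε])
  simp only [thickening_singleton] at hr_null
  let B : ℕ → Set X := fun i =>
    ball (TopologicalSpace.denseSeq X i) (r (TopologicalSpace.denseSeq X i))
  refine ⟨disjointed B, fun i => .disjointed (fun _ => measurableSet_ball) i,
    disjoint_disjointed B, ?_, fun i => ?_, fun i => ?_⟩
  · refine iUnion_disjointed.trans (eq_univ_of_forall fun x => mem_iUnion.2 ?_)
    obtain ⟨i, hi⟩ := (TopologicalSpace.denseRange_denseSeq X).exists_dist_lt x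
      (show (0 : ℝ) < ε / 4 by positivity)
    exact ⟨i, hi.trans (hr _).1⟩
  · refine disjointedRec (p := fun t => μ (frontier t) = 0) (fun t j ht => ?_) (hr_null _)
    exact null_frontier_inter ht ((frontier_compl (B j)).symm ▸ hr_null _)
  · calc ediam (disjointed B i) ≤ ediam (eball (TopologicalSpace.denseSeq X i) (ε / 2 : ℝ≥0)) := by
          refine ediam_mono ((disjointed_subset B i).trans ?_)
          rw [eball_coe]
          exact ball_subset_ball (hr _).2.le
      _ ≤ 2 * (ε / 2 : ℝ≥0) := ediam_eball_le
      _ = ε := by rw [← ENNReal.coe_ofNat, ← ENNReal.coe_mul, mul_div_cancel₀ _ two_ne_zero]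

theorem eventually_exists_le_transportCost_le [TopologicalSpace.SeparableSpace X] {ι : Type*}
    {l : Filter ι} {ν : ι → ProbabilityMeasure X} {μ : ProbabilityMeasure X}
    (h : Tendsto ν l (𝓝 μ)) {ε : ℝ≥0} (hε : 0 < ε) :
    ∀ᶠ i in l, ∃ ν' ≤ (ν i : Measure X), ∃ μ' ≤ (μ : Measure X),
      ν' univ = μ' univ ∧ 1 - ν' univ ≤ ε ∧ transportCost ν' μ' ≤ ε := by
  have : Nonempty X := μ.nonempty
  obtain ⟨S, hS, hd, hcover, hnull, hdiam⟩ := exists_partition_null_frontier (μ : Measure X) hε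
  have hsum : HasSum (fun i => (μ : Measure X) (S i)) 1 := by
    have htsum : 1 = ∑' i, (μ : Measure X) (S i) := by
      rw [← measure_iUnion hd hS, hcover, measure_univ]
    exact htsum ▸ ENNReal.summable.hasSum
  obtain ⟨s, hs⟩ : ∃ s : Finset ℕ, 1 - ∑ i ∈ s, (μ : Measure X) (S i) < ε := by
    refine (Tendsto.eventually_lt_const (u := (ε : ℝ≥0∞)) ?_
      (ENNReal.Tendsto.sub tendsto_const_nhds hsum (.inl ENNReal.one_ne_top))).exists
    simpa only [tsub_self, ENNReal.coe_pos] using hε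
  have hmass : Tendsto (fun n => 1 - ∑ i ∈ s, min ((ν n : Measure X) (S i)) ((μ : Measure X) (S i)))
      l (𝓝 (1 - ∑ i ∈ s, (μ : Measure X) (S i))) := by
    refine ENNReal.Tendsto.sub tendsto_const_nhds (tendsto_finsetSum s fun i _ => ?_)
      (.inl ENNReal.one_ne_top)
    simpa only [min_self] using
      (ProbabilityMeasure.tendsto_measure_of_null_frontier_of_tendsto' h (hnull i)).min
        (tendsto_const_nhds (x := (μ : Measure X) (S i)))
  filter_upwards [hmass.eventually_lt_const hs] with n hn
  obtain ⟨ν', hν', μ', hμ', hν'_mass, hmass', hcost⟩ :=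
    exists_le_transportCost_le_of_ediam_le s hS hd hdiam (ν n : Measure X) μ
  refine ⟨ν', hν', μ', hμ', hmass'.symm, ?_, ?_⟩
  · rw [hν'_mass]; exact hn.le
  · rwa [measure_univ, mul_one] at hcost

theorem excessMoment_le_liminf {ν : ℕ → ProbabilityMeasure X} {μ : ProbabilityMeasure X}
    (h : Tendsto ν atTop (𝓝 μ)) (x₀ : X) (r : ℝ≥0) :
    excessMoment x₀ r (μ : Measure X) ≤
      atTop.liminf fun n => excessMoment x₀ r (ν n : Measure X) := by
  have h_ofReal (x : X) : edist x x₀ - r = ENNReal.ofReal (max (dist x x₀ - r) 0) := by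
    rw [edist_dist, ← ENNReal.ofReal_coe_nnreal, ← ENNReal.ofReal_sub _ r.coe_nonneg,
      ENNReal.ofReal_max, ENNReal.ofReal_zero, max_eq_left zero_le]
  simp only [excessMoment, h_ofReal]
  exact lintegral_le_liminf_lintegral_of_forall_isOpen_measure_le_liminf_measure (by fun_prop)
    (fun _ => le_max_right _ _)
    fun _ hG => ProbabilityMeasure.le_liminf_measure_open_of_tendsto h hG

theorem firstMoment_le_liminf {ν : ℕ → ProbabilityMeasure X} {μ : ProbabilityMeasure X}
    (h : Tendsto ν atTop (𝓝 μ)) (x₀ : X) :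
    firstMoment x₀ (μ : Measure X) ≤ atTop.liminf fun n => firstMoment x₀ (ν n : Measure X) := by
  simpa only [excessMoment_zero] using excessMoment_le_liminf h x₀ 0

theorem tendsto_transportCost_of_tendsto [TopologicalSpace.SeparableSpace X]
    {ν : ℕ → ProbabilityMeasure X} {μ : ProbabilityMeasure X} (h : Tendsto ν atTop (𝓝 μ)) (x₀ : X)
    (hν : ∀ ε > 0, ∃ r : ℝ≥0, ∀ᶠ n in atTop, excessMoment x₀ r (ν n : Measure X) ≤ ε) :
    Tendsto (fun n => transportCost (ν n : Measure X) μ) atTop (𝓝 0) := by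
  refine ENNReal.tendsto_nhds_zero.2 fun ε hε => ?_
  obtain ⟨r, hr⟩ := hν (ε / 2 / 2) (ENNReal.half_pos (ENNReal.half_pos hε.ne').ne')
  have hμ : excessMoment x₀ r (μ : Measure X) ≤ ε / 2 / 2 :=
    (excessMoment_le_liminf h x₀ r).trans (liminf_le_of_frequently_le' hr.frequently)
  obtain ⟨δ, hδ, hδε⟩ := ENNReal.exists_nnreal_pos_mul_lt
    (show (1 + 2 * r : ℝ≥0∞) ≠ ⊤ by finiteness) (ENNReal.half_pos hε.ne').ne'
  filter_upwards [hr, eventually_exists_le_transportCost_le h hδ] with n hn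
    ⟨ν', hν', μ', hμ', hmass, hdeficit, hcost⟩
  calc transportCost (ν n : Measure X) μ
      ≤ transportCost ν' μ' + 2 * (r * ((ν n : Measure X) univ - ν' univ)) +
          (excessMoment x₀ r (ν n : Measure X) + excessMoment x₀ r (μ : Measure X)) :=
        transportCost_le_add_excessMoment (by simp only [measure_univ]) hν' hμ' hmass x₀ r
    _ ≤ δ + 2 * (r * δ) + (ε / 2 / 2 + ε / 2 / 2) := by
        gcongr
        rwa [measure_univ]
    _ = δ * (1 + 2 * r) + (ε / 2 / 2 + ε / 2 / 2) := by ring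
    _ ≤ ε / 2 + ε / 2 := by
        gcongr
        exact (ENNReal.add_halves _).le
    _ = ε := ENNReal.add_halves ε

theorem isTightMeasureSet_of_firstMoment_le [ProperSpace X] {x₀ : X} {C : ℝ≥0∞} (hC : C ≠ ⊤)
    {S : Set (Measure X)} (hS : ∀ μ ∈ S, firstMoment x₀ μ ≤ C) : IsTightMeasureSet S := by
  have hm : Measurable fun x => edist x x₀ := by fun_prop
  have hlim : Tendsto (fun r : ℝ => C / ENNReal.ofReal r) atTop (𝓝 0) := by
    simpa only [ENNReal.div_top] using
      ENNReal.Tendsto.const_div ENNReal.tendsto_ofReal_atTop (.inr hC)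
  refine isTightMeasureSet_of_tendsto_measure_compl_closedBall (x := x₀)
    (tendsto_of_tendsto_of_tendsto_of_le_of_le' tendsto_const_nhds hlim
      (.of_forall fun _ => zero_le) ?_)
  filter_upwards [eventually_gt_atTop 0] with r hr
  refine iSup₂_le fun μ hμ => ?_
  calc μ (closedBall x₀ r)ᶜ ≤ μ {x | ENNReal.ofReal r ≤ edist x x₀} :=
        measure_mono fun x hx => by
          rw [mem_compl_iff, mem_closedBall, not_le] at hx
          exact (ENNReal.ofReal_le_ofReal hx.le).trans_eq (edist_dist x x₀).symm
    _ ≤ firstMoment x₀ μ / ENNReal.ofReal r :=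
        meas_ge_le_lintegral_div hm.aemeasurable (ENNReal.ofReal_pos.2 hr).ne'
          ENNReal.ofReal_ne_top
    _ ≤ C / ENNReal.ofReal r := by gcongr; exact hS μ hμ

end WeakConvergence

theorem exists_subseq_tendsto_transportCost [MetricSpace X] [ProperSpace X] [MeasurableSpace X]
    [BorelSpace X] {x₀ : X} {ν : ℕ → ProbabilityMeasure X} {C : ℝ≥0∞} (hC : C ≠ ⊤)
    (hbound : ∀ n, firstMoment x₀ (ν n : Measure X) ≤ C)
    (hexcess : ∀ ε > 0, ∃ r : ℝ≥0, ∀ᶠ n in atTop, excessMoment x₀ r (ν n : Measure X) ≤ ε) :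
    ∃ μ : ProbabilityMeasure X, firstMoment x₀ (μ : Measure X) ≠ ⊤ ∧ ∃ φ : ℕ → ℕ, StrictMono φ ∧
      Tendsto (fun n => transportCost (ν (φ n) : Measure X) μ) atTop (𝓝 0) := by
  have htight : IsTightMeasureSet {(ρ : Measure X) | ρ ∈ range ν} :=
    isTightMeasureSet_of_firstMoment_le hC (by rintro _ ⟨_, ⟨n, rfl⟩, rfl⟩; exact hbound n)
  obtain ⟨μ, -, φ, hφ, hlim⟩ := (isCompact_closure_of_isTightMeasureSet htight).tendsto_subseq
    fun n => subset_closure (mem_range_self n)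
  refine ⟨μ, ne_top_of_le_ne_top hC ?_, φ, hφ,
    tendsto_transportCost_of_tendsto hlim x₀ fun ε hε => ?_⟩
  · exact (firstMoment_le_liminf hlim x₀).trans
      (liminf_le_of_frequently_le' (.of_forall fun n => hbound (φ n)))
  · obtain ⟨r, hr⟩ := hexcess ε hε
    exact ⟨r, hφ.tendsto_atTop.eventually hr⟩

section WassersteinOne

variable [MetricSpace X] [MeasurableSpace X]

theorem wCost_one (μ ν : Measure X) [IsProbabilityMeasure μ] :
    wCost 1 μ ν = transportCost μ ν := by
  simp only [wCost, transportCost, Real.rpow_one, ← edist_dist]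
  refine iInf_congr fun π => iInf_congr_Prop ⟨And.right, fun h => ⟨⟨?_⟩, h⟩⟩ fun _ => rfl
  rw [h.measure_univ_eq, measure_univ]

theorem Wp_one (μ ν : Measure X) [IsProbabilityMeasure μ] :
    Wp 1 μ ν = (transportCost μ ν).toReal := by
  rw [Wp, wCost_one, div_one, ENNReal.rpow_one]

theorem mem_Pp_one_iff {x₀ : X} {μ : Measure X} :
    μ ∈ Pp 1 x₀ ↔ IsProbabilityMeasure μ ∧ firstMoment x₀ μ < ⊤ := by
  simp only [Pp, FiniteMoment, firstMoment, Real.rpow_one, ← edist_dist, edist_comm x₀,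
    mem_ofPred_eq]

theorem transportCost_dirac [OpensMeasurableSpace X] (μ : Measure X) [IsProbabilityMeasure μ]
    (x₀ : X) : transportCost μ (Measure.dirac x₀) = firstMoment x₀ μ := by
  have hm : Measurable fun x => edist x x₀ := by fun_prop
  apply le_antisymm
  · refine (transportCost_le_firstMoment_add (by simp only [measure_univ]) x₀).trans_eq ?_
    rw [firstMoment, firstMoment, lintegral_dirac' x₀ hm, edist_self, add_zero]
  · refine le_iInf₂ fun π hπ => ?_
    have hsnd : ∀ᵐ q ∂π, q.2 = x₀ :=
      hπ.ae_snd (p := (· = x₀)) (by simp only [ae_dirac_eq, eventually_pure])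
    rw [firstMoment, ← hπ.lintegral_fst hm]
    exact lintegral_mono_ae (hsnd.mono fun q hq => by rw [hq])

theorem firstMoment_le_of_Wp_dirac_le [OpensMeasurableSpace X] {x₀ : X} {μ : Measure X}
    (hμ : μ ∈ Pp 1 x₀) {R : ℝ} (hR : Wp 1 μ (Measure.dirac x₀) ≤ R) :
    firstMoment x₀ μ ≤ ENNReal.ofReal R := by
  obtain ⟨_, hfin⟩ := mem_Pp_one_iff.1 hμ
  rw [Wp_one, transportCost_dirac] at hR
  exact (ENNReal.le_ofReal_iff_toReal_le hfin.ne (ENNReal.toReal_nonneg.trans hR)).2 hR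

theorem exists_subseq_WpTendsto_one [BorelSpace X] [ProperSpace X] {x₀ : X}
    {ν : ℕ → Measure X} (hν : ∀ n, ν n ∈ Pp 1 x₀) {C : ℝ≥0∞} (hC : C ≠ ⊤)
    (hbound : ∀ n, firstMoment x₀ (ν n) ≤ C)
    (hexcess : ∀ ε > 0, ∃ r : ℝ≥0, ∀ᶠ n in atTop, excessMoment x₀ r (ν n) ≤ ε) :
    ∃ μ ∈ Pp 1 x₀, ∃ φ : ℕ → ℕ, StrictMono φ ∧ WpTendsto 1 (fun n => ν (φ n)) μ := by
  have hprob (n : ℕ) : IsProbabilityMeasure (ν n) := (mem_Pp_one_iff.1 (hν n)).1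
  obtain ⟨μ, hμ, φ, hφ, hlim⟩ :=
    exists_subseq_tendsto_transportCost (ν := fun n => ⟨ν n, hprob n⟩) hC hbound hexcess
  refine ⟨μ, mem_Pp_one_iff.2 ⟨inferInstance, hμ.lt_top⟩, φ, hφ, ?_⟩
  simp only [WpTendsto, Wp_one]
  exact (ENNReal.tendsto_toReal ENNReal.zero_ne_top).comp hlim

end WassersteinOne

section Dynamics

theorem iterate_map_measure [MeasurableSpace X] {f : X → X} (hf : Measurable f) (μ : Measure X)
    (k : ℕ) : (fun ρ : Measure X => ρ.map f)^[k] μ = μ.map f^[k] := by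
  induction k with
  | zero => exact Measure.map_id.symm
  | succ k ih =>
    rw [Function.iterate_succ_apply', ih, Function.iterate_succ',
      Measure.map_map hf (hf.iterate k)]

theorem dist_iterate_le_max [PseudoMetricSpace X] {x₀ : X} {g : X → X} {r c : ℝ} (hr : 0 ≤ r)
    (hc0 : 0 ≤ c) (hc1 : c ≤ 1)
    (hg : ∀ R, r ≤ R → ∀ x ∈ closedBall x₀ R, g x ∈ closedBall x₀ (c * R)) (q : ℕ) (x : X) :
    dist (g^[q] x) x₀ ≤ max r (c ^ q * dist x x₀) := by
  induction q with
  | zero => rw [Function.iterate_zero_apply, pow_zero, one_mul]; exact le_max_right _ _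
  | succ q ih =>
    calc dist (g^[q + 1] x) x₀ = dist (g (g^[q] x)) x₀ := by rw [Function.iterate_succ_apply']
      _ ≤ c * max r (c ^ q * dist x x₀) := hg _ (le_max_left _ _) _ ih
      _ = max (c * r) (c ^ (q + 1) * dist x x₀) := by
        rw [mul_max_of_nonneg _ _ hc0, pow_succ', mul_assoc]
      _ ≤ max r (c ^ (q + 1) * dist x x₀) := max_le_max_right _ (mul_le_of_le_one_left hr hc1)

theorem excessMoment_iterate_map_le [PseudoMetricSpace X] [MeasurableSpace X]
    [OpensMeasurableSpace X] {x₀ : X} {f : X → X} (hf : Measurable f) {r c : ℝ≥0} (hc : c ≤ 1)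
    {m : ℕ} (hcontr : ∀ R : ℝ, r ≤ R → ∀ x ∈ closedBall x₀ R, f^[m] x ∈ closedBall x₀ (c * R))
    (μ : Measure X) (n : ℕ) :
    excessMoment x₀ r (μ.map f^[n]) ≤ ↑(c ^ (n / m)) * firstMoment x₀ (μ.map f^[n % m]) := by
  have hg : Measurable (f^[m])^[n / m] := (hf.iterate m).iterate _
  have hsplit : μ.map f^[n] = (μ.map f^[n % m]).map (f^[m])^[n / m] := by
    rw [Measure.map_map hg (hf.iterate _), ← Function.iterate_mul, ← Function.iterate_add,
      Nat.div_add_mod]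
  rw [hsplit]
  refine excessMoment_map_le hg (fun x => ?_) _
  have h := dist_iterate_le_max r.coe_nonneg c.coe_nonneg hc hcontr (n / m) x
  simp only [edist_nndist]
  exact_mod_cast h

theorem tendsto_excessMoment_iterate_map [PseudoMetricSpace X] [MeasurableSpace X]
    [OpensMeasurableSpace X] {x₀ : X} {f : X → X} (hf : Measurable f) {r c : ℝ≥0} (hc : c < 1)
    {m : ℕ} (hm : 0 < m)
    (hcontr : ∀ R : ℝ, r ≤ R → ∀ x ∈ closedBall x₀ R, f^[m] x ∈ closedBall x₀ (c * R))
    {μ : ℕ → Measure X} {M : ℕ → ℕ} (hM : Tendsto M atTop atTop) {C : ℝ≥0∞} (hC : C ≠ ⊤)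
    (hbound : ∀ n, ∀ k ≤ M n, firstMoment x₀ ((μ n).map f^[k]) ≤ C) :
    Tendsto (fun n => excessMoment x₀ r ((μ n).map f^[M n])) atTop (𝓝 0) := by
  have hpow : Tendsto (fun n => c ^ (M n / m)) atTop (𝓝 0) :=
    (tendsto_pow_atTop_nhds_zero_of_lt_one zero_le hc).comp
      ((Nat.tendsto_div_const_atTop hm.ne').comp hM)
  have hdecay : Tendsto (fun n => ↑(c ^ (M n / m)) * C) atTop (𝓝 0) := by
    simpa only [ENNReal.coe_zero, zero_mul] using
      ENNReal.Tendsto.mul_const (ENNReal.tendsto_coe.2 hpow) (.inr hC)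
  refine tendsto_of_tendsto_of_tendsto_of_le_of_le tendsto_const_nhds hdecay
    (fun _ => zero_le) fun n => ?_
  refine (excessMoment_iterate_map_le hf hc.le hcontr (μ n) (M n)).trans ?_
  gcongr
  exact hbound n _ (Nat.mod_le _ _)

end Dynamics

theorem exponential_contraction_implies_admissible_general [MetricSpace X] [MeasurableSpace X]
    [BorelSpace X] [ProperSpace X] {x₀ : X} {f : X → X} (hf : Measurable f) {R₀ c : ℝ}
    (hR₀ : 0 ≤ R₀) (hc0 : 0 ≤ c) (hc1 : c < 1) {m : ℕ} (hm : 0 < m)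
    (hcontr : ∀ R : ℝ, R₀ ≤ R → ∀ x ∈ closedBall x₀ R, f^[m] x ∈ closedBall x₀ (c * R))
    {N : Set (Measure X)} (hN : N ⊆ Pp 1 x₀) (hbdd : WpBounded 1 x₀ N) :
    WpAdmissible 1 x₀ (fun μ : Measure X => μ.map f) N := by
  obtain ⟨R, hR⟩ := hbdd
  lift R₀ to ℝ≥0 using hR₀
  lift c to ℝ≥0 using hc0
  have hmoment (μ : Measure X) (hμ : μ ∈ N) : firstMoment x₀ μ ≤ ENNReal.ofReal R :=
    firstMoment_le_of_Wp_dirac_le (hN hμ) (hR μ hμ)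
  intro μs M hM horbit
  simp only [iterate_map_measure hf] at horbit
  have hend (n : ℕ) : (μs n).map f^[M n] ∈ N := horbit n (M n) le_rfl
  have hexcess := tendsto_excessMoment_iterate_map hf (by exact_mod_cast hc1) hm hcontr hM
    ENNReal.ofReal_ne_top fun n k hk => hmoment _ (horbit n k hk)
  simpa only [iterate_map_measure hf] using
    exists_subseq_WpTendsto_one (fun n => hN (hend n)) ENNReal.ofReal_ne_top
      (fun n => hmoment _ (hend n)) fun ε hε => ⟨R₀, hexcess.eventually_le_const hε⟩

/-- If some iterate `f^m` contracts all large closed balls around `x₀` by a factor `c < 1`,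
then every bounded `w₁`-closed subset of `P₁(X)` is `f_*`-admissible. -/
theorem exponential_contraction_implies_admissible
    [MetricSpace X] [MeasurableSpace X] [BorelSpace X] [ProperSpace X] [CompleteSpace X]
    [TopologicalSpace.SeparableSpace X] (x₀ : X) (f : X → X) (hf : Continuous f)
    (hmap : ∀ μ ∈ Pp 1 x₀, μ.map f ∈ Pp 1 x₀)
    (hcont : ∀ (μs : ℕ → Measure X) (μ : Measure X), (∀ n, μs n ∈ Pp 1 x₀) → μ ∈ Pp 1 x₀ →
      WpTendsto 1 μs μ → WpTendsto 1 (fun n => (μs n).map f) (μ.map f))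
    (R₀ c : ℝ) (hR₀ : 0 ≤ R₀) (hc0 : 0 ≤ c) (hc1 : c < 1) (m : ℕ) (hm : 0 < m)
    (hcontr : ∀ R : ℝ, R₀ ≤ R → ∀ x ∈ Metric.closedBall x₀ R,
      f^[m] x ∈ Metric.closedBall x₀ (c * R)) :
    ∀ N : Set (Measure X), WpClosed 1 x₀ N → WpBounded 1 x₀ N →
      WpAdmissible 1 x₀ (fun μ : Measure X => μ.map f) N :=
  fun _ hN hbdd =>
    exponential_contraction_implies_admissible_general hf.measurable hR₀ hc0 hc1 hm hcontr hN.1 hbdd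
end
end

section
/- Let (X,d) be a proper complete separable metric space and f: X -> X continuous such that the pushforward f_* is a w_1-continuous self-map of P_1(X). Let B be a closed bounded subset of (P_1(X), w_1), let U be a delta-neighborhood of B (for some delta > 0) whose closure is f_*-admissible, and suppose f_* is uniformly w_1-continuous on U. If F_n: P_1(X) -> P_1(X) are continuous maps converging to f_* uniformly on U, i.e. sup over mu in U of w_1(f_*(mu), F_n(mu)) tends to 0 as n -> infinity, then B is {F_n}-admissible. -/
open MeasureTheory Topology Filter Metric Set
open scoped ENNReal NNReal

noncomputable section

variable {X : Type*}

/-!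
Uniform continuity of `f_*` on `U` and uniform convergence make orbit segments of `F n` of any
fixed length `k` that stay in `B` be shadowed, for large `n`, by `f_*`-orbits; these then stay in
the neighborhood `U` of `B`. Given long `F n`-orbits in `B`, choose `n = φ k` growing so fast that
the *last* `k` steps are shadowed up to `1 / (k + 1)`. The shadowing `f_*`-orbits have length `k`
and lie in `U`, so admissibility makes their endpoints subconverge, and the endpoints of the
`F n`-orbits are ever closer to them.

The argument takes place in an arbitrary pseudometric space. It applies to `(P_p(X), w_p)` once
`w_p` satisfies the triangle inequality, which is Minkowski's inequality on a gluing of two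
couplings along their common marginal.
-/

section Shadowing

variable {Y : Type*}

/-- The metric-space notion of `{F n}`-admissibility of a set `N`, of which `WpSeqAdmissible` is
the counterpart on the Wasserstein space. -/
def SeqAdmissible [TopologicalSpace Y] (F : ℕ → Y → Y) (N : Set Y) : Prop :=
  ∀ (x : ℕ → Y) (m : ℕ → ℕ), Tendsto m atTop atTop →
    (∀ n, ∀ k ≤ m n, (F n)^[k] (x n) ∈ N) →
    ∃ a, ∃ φ : ℕ → ℕ, StrictMono φ ∧
      Tendsto (fun j => (F (φ j))^[m (φ j)] (x (φ j))) atTop (𝓝 a)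

variable [PseudoMetricSpace Y] {ι : Type*} {l : Filter ι} {F : ι → Y → Y} {g : Y → Y}
  {B U : Set Y} {δ : ℝ}

theorem eventually_dist_iterate_lt (hδ : 0 < δ) (hBU : thickening δ B ⊆ U)
    (hg : UniformContinuousOn g U) (hF : TendstoUniformlyOn F g l B) (k : ℕ) {η : ℝ}
    (hη : 0 < η) :
    ∀ᶠ n in l, ∀ y, (∀ j ≤ k, (F n)^[j] y ∈ B) → dist (g^[k] y) ((F n)^[k] y) < η := by
  induction k generalizing η with
  | zero => exact .of_forall fun n y _ => by simpa using hη
  | succ k ih =>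
    obtain ⟨d, hd, hgd⟩ := Metric.uniformContinuousOn_iff.1 hg (η / 2) (half_pos hη)
    filter_upwards [ih (lt_min hd hδ), Metric.tendstoUniformlyOn_iff.1 hF (η / 2) (half_pos hη)]
      with n hshadow hclose y hy
    have hFB : (F n)^[k] y ∈ B := hy k k.le_succ
    have hdist := hshadow y fun j hj => hy j (hj.trans k.le_succ)
    have hgU : g^[k] y ∈ U :=
      hBU (mem_thickening_iff.2 ⟨_, hFB, hdist.trans_le (min_le_right _ _)⟩)
    have hFU : (F n)^[k] y ∈ U := hBU (self_subset_thickening hδ B hFB)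
    rw [Function.iterate_succ_apply', Function.iterate_succ_apply']
    calc dist (g (g^[k] y)) (F n ((F n)^[k] y))
        ≤ dist (g (g^[k] y)) (g ((F n)^[k] y)) + dist (g ((F n)^[k] y)) (F n ((F n)^[k] y)) :=
          dist_triangle _ _ _
      _ < η / 2 + η / 2 :=
          add_lt_add (hgd _ hgU _ hFU (hdist.trans_le (min_le_left _ _))) (hclose _ hFB)
      _ = η := add_halves η

theorem eventually_forall_le_dist_iterate_lt (hδ : 0 < δ) (hBU : thickening δ B ⊆ U)
    (hg : UniformContinuousOn g U) (hF : TendstoUniformlyOn F g l B) (k : ℕ) {η : ℝ}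
    (hη : 0 < η) :
    ∀ᶠ n in l, ∀ y, (∀ j ≤ k, (F n)^[j] y ∈ B) →
      ∀ i ≤ k, dist (g^[i] y) ((F n)^[i] y) < η := by
  have hall := (eventually_all_finite (finite_Iic k)).2 fun i _ =>
    eventually_dist_iterate_lt hδ hBU hg hF i hη
  filter_upwards [hall] with n hn y hy i hi
  exact hn i hi y fun j hj => hy j (hj.trans hi)

theorem SeqAdmissible.of_tendstoUniformlyOn {F : ℕ → Y → Y} (hδ : 0 < δ)
    (hBU : thickening δ B ⊆ U) (hU : SeqAdmissible (fun _ => g) U)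
    (hg : UniformContinuousOn g U) (hF : TendstoUniformlyOn F g atTop B) :
    SeqAdmissible F B := by
  intro x m hm horbit
  obtain ⟨φ, hφ, hφ_spec⟩ := extraction_forall_of_eventually fun k : ℕ =>
    (hm.eventually_ge_atTop k).and <| eventually_forall_le_dist_iterate_lt hδ hBU hg hF k
      (lt_min hδ (Nat.one_div_pos_of_nat (n := k)))
  choose hφm hshadow using hφ_spec
  let y (k : ℕ) : Y := (F (φ k))^[m (φ k) - k] (x (φ k))
  have iterate_y (k j : ℕ) :
      (F (φ k))^[j] (y k) = (F (φ k))^[j + (m (φ k) - k)] (x (φ k)) :=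
    (Function.iterate_add_apply _ _ _ _).symm
  have hyB (k j : ℕ) (hj : j ≤ k) : (F (φ k))^[j] (y k) ∈ B := by
    rw [iterate_y]
    exact horbit _ _ (by have := hφm k; lia)
  have hclose (k j : ℕ) (hj : j ≤ k) := lt_min_iff.1 (hshadow k (y k) (hyB k) j hj)
  obtain ⟨a, ψ, hψ, hlim⟩ := hU y id tendsto_id fun k j hj =>
    hBU (mem_thickening_iff.2 ⟨_, hyB k j hj, (hclose k j hj).1⟩)
  have hend (k : ℕ) : (F (φ k))^[m (φ k)] (x (φ k)) = (F (φ k))^[k] (y k) := by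
    rw [iterate_y, Nat.add_sub_cancel' (hφm k)]
  have hdist : Tendsto (fun k => dist (g^[k] (y k)) ((F (φ k))^[m (φ k)] (x (φ k)))) atTop
      (𝓝 0) :=
    squeeze_zero (fun _ => dist_nonneg) (fun k => (hend k ▸ (hclose k k le_rfl).2).le)
      tendsto_one_div_add_atTop_nhds_zero_nat
  exact ⟨a, φ ∘ ψ, hφ.comp hψ, hlim.congr_dist (hdist.comp hψ.tendsto_atTop)⟩

end Shadowing

section Gluing

variable {α β Ω : Type*} [MeasurableSpace α] [MeasurableSpace β] [MeasurableSpace Ω]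

theorem map_prodMap_compProd_comap (μ : Measure α) [SFinite μ] (κ : ProbabilityTheory.Kernel β Ω)
    [ProbabilityTheory.IsSFiniteKernel κ] {f : α → β} (hf : Measurable f) :
    (μ.compProd (κ.comap f hf)).map (Prod.map f id) = (μ.map f).compProd κ := by
  have hmap : Measurable (Prod.map f (id : Ω → Ω)) := hf.prodMap measurable_id
  refine Measure.ext_of_lintegral _ fun h hh => ?_
  calc ∫⁻ q, h q ∂(μ.compProd (κ.comap f hf)).map (Prod.map f id)
      = ∫⁻ q, (h ∘ Prod.map f id) q ∂μ.compProd (κ.comap f hf) := lintegral_map hh hmap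
    _ = ∫⁻ a, ∫⁻ ω, h (f a, ω) ∂κ (f a) ∂μ := Measure.lintegral_compProd (hh.comp hmap)
    _ = ∫⁻ b, ∫⁻ ω, h (b, ω) ∂κ b ∂μ.map f :=
        (lintegral_map hh.lintegral_kernel_prod_right' hf).symm
    _ = ∫⁻ q, h q ∂(μ.map f).compProd κ := (Measure.lintegral_compProd hh).symm

theorem exists_measure_fst_eq_map_prodMap_eq [StandardBorelSpace Ω] [Nonempty Ω]
    {π₁ : Measure (α × β)} {π₂ : Measure (β × Ω)} [SFinite π₁] [IsFiniteMeasure π₂]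
    (h : π₁.snd = π₂.fst) :
    ∃ γ : Measure ((α × β) × Ω), γ.fst = π₁ ∧ γ.map (Prod.map Prod.snd id) = π₂ := by
  refine ⟨π₁.compProd (π₂.condKernel.comap Prod.snd measurable_snd),
    Measure.fst_compProd _ _, ?_⟩
  rw [map_prodMap_compProd_comap, ← Measure.snd, h, π₂.disintegrate]

end Gluing

theorem lintegral_dist_rpow_triangle {Ω E : Type*} [MeasurableSpace Ω] [PseudoMetricSpace E]
    {γ : Measure Ω} {a b c : Ω → E} {p : ℝ} (hp : 1 ≤ p)
    (hab : AEMeasurable (fun ω => dist (a ω) (b ω)) γ)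
    (hbc : AEMeasurable (fun ω => dist (b ω) (c ω)) γ) :
    (∫⁻ ω, ENNReal.ofReal (dist (a ω) (c ω) ^ p) ∂γ) ^ (1 / p) ≤
      (∫⁻ ω, ENNReal.ofReal (dist (a ω) (b ω) ^ p) ∂γ) ^ (1 / p) +
        (∫⁻ ω, ENNReal.ofReal (dist (b ω) (c ω) ^ p) ∂γ) ^ (1 / p) := by
  have hp₀ : 0 ≤ p := zero_le_one.trans hp
  simp only [← ENNReal.ofReal_rpow_of_nonneg dist_nonneg hp₀]
  refine le_trans ?_ (ENNReal.lintegral_Lp_add_le hab.ennreal_ofReal hbc.ennreal_ofReal hp)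
  gcongr with ω
  rw [Pi.add_apply, ← ENNReal.ofReal_add dist_nonneg dist_nonneg]
  exact ENNReal.ofReal_le_ofReal (dist_triangle _ _ _)

section Wasserstein

variable [MetricSpace X] [MeasurableSpace X] {p : ℝ} {x₀ : X} {μ ν ρ : Measure X}

theorem wCost_map_le_s11 {Ω : Type*} [MeasurableSpace Ω] (p : ℝ) (γ : Measure Ω)
    [IsProbabilityMeasure γ] {a b : Ω → X} (ha : Measurable a) (hb : Measurable b) :
    wCost p (γ.map a) (γ.map b) ≤ ∫⁻ ω, ENNReal.ofReal (dist (a ω) (b ω) ^ p) ∂γ := by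
  have hab : Measurable fun ω => (a ω, b ω) := ha.prodMk hb
  refine (iInf₂_le (γ.map fun ω => (a ω, b ω))
    ⟨Measure.isProbabilityMeasure_map hab.aemeasurable, ?_, ?_⟩).trans (lintegral_map_le _ _)
  · exact Measure.map_map measurable_fst hab
  · exact Measure.map_map measurable_snd hab

theorem wCost_self (hp : 0 < p) (μ : Measure X) [IsProbabilityMeasure μ] : wCost p μ μ = 0 := by
  simpa [Real.zero_rpow hp.ne'] using wCost_map_le_s11 p μ measurable_id measurable_id

theorem wCost_comm (p : ℝ) (μ ν : Measure X) : wCost p μ ν = wCost p ν μ := by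
  have wCost_le_swap (μ ν : Measure X) : wCost p μ ν ≤ wCost p ν μ := by
    refine le_iInf₂ fun π hπ => ?_
    obtain ⟨hπ_prob, rfl, rfl⟩ := hπ
    simpa only [dist_comm] using wCost_map_le_s11 p π measurable_snd measurable_fst
  exact (wCost_le_swap μ ν).antisymm (wCost_le_swap ν μ)

theorem wCost_rpow_eq_iInf (hp : 0 < p) (μ ν : Measure X) :
    wCost p μ ν ^ (1 / p) =
      ⨅ π ∈ {π : Measure (X × X) | IsProbabilityMeasure π ∧ IsCoupling π μ ν},
        (∫⁻ q, ENNReal.ofReal (dist q.1 q.2 ^ p) ∂π) ^ (1 / p) :=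
  (ENNReal.orderIsoRpow (1 / p) (one_div_pos.2 hp)).map_iInf₂ _

theorem wCost_rpow_triangle [BorelSpace X] [SecondCountableTopology X] [CompleteSpace X]
    (hp : 1 ≤ p) (μ ν ρ : Measure X) :
    wCost p μ ρ ^ (1 / p) ≤ wCost p μ ν ^ (1 / p) + wCost p ν ρ ^ (1 / p) := by
  have hp₀ : 0 < p := zero_lt_one.trans_le hp
  rw [wCost_rpow_eq_iInf hp₀ μ ν, wCost_rpow_eq_iInf hp₀ ν ρ]
  refine ENNReal.le_iInf₂_add_iInf₂ fun π₁ hπ₁ π₂ hπ₂ => ?_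
  obtain ⟨hprob₁, rfl, rfl⟩ := hπ₁
  obtain ⟨hprob₂, hfst, rfl⟩ := hπ₂
  have : Nonempty X := (nonempty_of_isProbabilityMeasure π₁).map Prod.fst
  obtain ⟨γ, rfl, rfl⟩ := exists_measure_fst_eq_map_prodMap_eq (π₁ := π₁) (π₂ := π₂) hfst.symm
  have : IsProbabilityMeasure (γ.map Prod.fst) := hprob₁
  have : IsProbabilityMeasure γ := Measure.isProbabilityMeasure_of_map Prod.fst
  have hmap : Measurable (Prod.map Prod.snd id : (X × X) × X → X × X) := by fun_prop
  rw [Measure.fst, Measure.map_map measurable_fst measurable_fst,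
    Measure.map_map measurable_snd hmap, lintegral_map (by fun_prop) measurable_fst,
    lintegral_map (by fun_prop) hmap]
  calc wCost p (γ.map (Prod.fst ∘ Prod.fst)) (γ.map (Prod.snd ∘ Prod.map Prod.snd id)) ^ (1 / p)
      ≤ (∫⁻ q, ENNReal.ofReal (dist q.1.1 q.2 ^ p) ∂γ) ^ (1 / p) := by
        gcongr
        exact wCost_map_le_s11 p γ (measurable_fst.comp measurable_fst) (measurable_snd.comp hmap)
    _ ≤ _ := lintegral_dist_rpow_triangle (b := fun q : (X × X) × X => q.1.2) hp
        (by fun_prop) (by fun_prop)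

theorem wCost_dirac_le (p : ℝ) (μ : Measure X) [IsProbabilityMeasure μ] (x₀ : X) :
    wCost p μ (Measure.dirac x₀) ≤ ∫⁻ x, ENNReal.ofReal (dist x₀ x ^ p) ∂μ := by
  simpa [dist_comm] using wCost_map_le_s11 p μ measurable_id (measurable_const (a := x₀))

theorem wCost_rpow_dirac_ne_top (hp : 0 ≤ p) (hμ : μ ∈ Pp p x₀) :
    wCost p μ (Measure.dirac x₀) ^ (1 / p) ≠ ⊤ := by
  obtain ⟨hμ_prob, hμ_moment⟩ := hμ
  exact ENNReal.rpow_ne_top_of_nonneg (one_div_nonneg.2 hp)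
    ((wCost_dirac_le p μ x₀).trans_lt hμ_moment).ne

theorem wCost_rpow_ne_top [BorelSpace X] [SecondCountableTopology X] [CompleteSpace X]
    (hp : 1 ≤ p) (hμ : μ ∈ Pp p x₀) (hν : ν ∈ Pp p x₀) : wCost p μ ν ^ (1 / p) ≠ ⊤ := by
  have hp₀ : 0 ≤ p := zero_le_one.trans hp
  refine ne_top_of_le_ne_top (ENNReal.add_ne_top.2 ⟨wCost_rpow_dirac_ne_top hp₀ hμ, ?_⟩)
    (wCost_rpow_triangle hp μ (Measure.dirac x₀) ν)
  rw [wCost_comm]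
  exact wCost_rpow_dirac_ne_top hp₀ hν

theorem wp_self (hp : 0 < p) (μ : Measure X) [IsProbabilityMeasure μ] : Wp p μ μ = 0 := by
  rw [Wp, wCost_self hp, ENNReal.zero_rpow_of_pos (one_div_pos.2 hp), ENNReal.toReal_zero]

theorem wp_comm (p : ℝ) (μ ν : Measure X) : Wp p μ ν = Wp p ν μ := by
  rw [Wp, Wp, wCost_comm]

theorem wp_triangle [BorelSpace X] [SecondCountableTopology X] [CompleteSpace X] (hp : 1 ≤ p)
    (hμ : μ ∈ Pp p x₀) (hν : ν ∈ Pp p x₀) (hρ : ρ ∈ Pp p x₀) :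
    Wp p μ ρ ≤ Wp p μ ν + Wp p ν ρ := by
  have hμν := wCost_rpow_ne_top hp hμ hν
  have hνρ := wCost_rpow_ne_top hp hν hρ
  rw [Wp, Wp, Wp, ← ENNReal.toReal_add hμν hνρ]
  exact ENNReal.toReal_mono (ENNReal.add_ne_top.2 ⟨hμν, hνρ⟩) (wCost_rpow_triangle hp μ ν ρ)

theorem subset_wpClosure (hp : 0 < p) {S : Set (Measure X)} (hS : S ⊆ Pp p x₀) :
    S ⊆ WpClosure p x₀ S := by
  intro μ hμ
  have := (hS hμ).1
  refine ⟨hS hμ, fun _ => μ, fun _ => hμ, ?_⟩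
  simp only [WpTendsto, wp_self hp, tendsto_const_nhds]

theorem WpSeqAdmissible.mono {F : ℕ → Measure X → Measure X} {M N : Set (Measure X)}
    (hN : WpSeqAdmissible p x₀ F N) (hMN : M ⊆ N) : WpSeqAdmissible p x₀ F M :=
  fun μs m hm horbit => hN μs m hm fun n k hk => hMN (horbit n k hk)

/-- The Wasserstein space `(P_p(X), w_p)` as a type, so that the theory of metric spaces applies
to it. -/
abbrev WassersteinSpace (p : ℝ) (x₀ : X) : Type _ := Pp p x₀

instance WassersteinSpace.instDist : Dist (WassersteinSpace p x₀) :=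
  ⟨fun μ ν => Wp p μ.1 ν.1⟩

variable [BorelSpace X] [SecondCountableTopology X] [CompleteSpace X] [Fact (1 ≤ p)]

instance WassersteinSpace.instPseudoMetricSpace : PseudoMetricSpace (WassersteinSpace p x₀) where
  dist_self μ :=
    have := μ.2.1
    wp_self (one_pos.trans_le Fact.out) μ.1
  dist_comm μ ν := wp_comm p μ.1 ν.1
  dist_triangle μ ν ρ := wp_triangle Fact.out μ.2 ν.2 ρ.2

theorem WassersteinSpace.tendsto_iff {μs : ℕ → WassersteinSpace p x₀}
    {μ : WassersteinSpace p x₀} :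
    Tendsto μs atTop (𝓝 μ) ↔ WpTendsto p (fun n => (μs n).1) μ.1 :=
  tendsto_iff_dist_tendsto_zero

variable {F : ℕ → Measure X → Measure X} {N : Set (Measure X)}

theorem WpSeqAdmissible.seqAdmissible_restrict (hN : WpSeqAdmissible p x₀ F N)
    (hF : ∀ n, MapsTo (F n) (Pp p x₀) (Pp p x₀)) :
    SeqAdmissible (fun n => (hF n).restrict) ((↑) ⁻¹' N : Set (WassersteinSpace p x₀)) := by
  intro μs m hm horbit
  simp only [mem_preimage, MapsTo.coe_iterate_restrict] at horbit
  obtain ⟨μ, hμ, φ, hφ, hlim⟩ := hN (fun n => μs n) m hm horbit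
  refine ⟨⟨μ, hμ⟩, φ, hφ, WassersteinSpace.tendsto_iff.2 ?_⟩
  simpa only [MapsTo.coe_iterate_restrict] using hlim

theorem SeqAdmissible.wpSeqAdmissible (hNP : N ⊆ Pp p x₀)
    {hF : ∀ n, MapsTo (F n) (Pp p x₀) (Pp p x₀)}
    (hN : SeqAdmissible (fun n => (hF n).restrict)
      ((↑) ⁻¹' N : Set (WassersteinSpace p x₀))) :
    WpSeqAdmissible p x₀ F N := by
  intro μs m hm horbit
  have hμs (n : ℕ) : μs n ∈ Pp p x₀ := hNP (horbit n 0 (Nat.zero_le _))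
  obtain ⟨μ, φ, hφ, hlim⟩ := hN (fun n => ⟨μs n, hμs n⟩) m hm <| by
    simpa only [mem_preimage, MapsTo.coe_iterate_restrict] using horbit
  refine ⟨μ, μ.2, φ, hφ, ?_⟩
  simpa only [WassersteinSpace.tendsto_iff, MapsTo.coe_iterate_restrict] using hlim

end Wasserstein

theorem uniform_perturbation_admissible_general [MetricSpace X] [MeasurableSpace X] [BorelSpace X]
    [SecondCountableTopology X] [CompleteSpace X] {p : ℝ} (hp : 1 ≤ p) {x₀ : X}
    {G : Measure X → Measure X} (hG : MapsTo G (Pp p x₀) (Pp p x₀))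
    {F : ℕ → Measure X → Measure X} (hF : ∀ n, MapsTo (F n) (Pp p x₀) (Pp p x₀))
    {B U : Set (Measure X)} (hB : B ⊆ Pp p x₀) {δ : ℝ} (hδ : 0 < δ)
    (hBU : ∀ μ ∈ Pp p x₀, ∀ ν ∈ B, Wp p μ ν < δ → μ ∈ U) (hU_adm : WpAdmissible p x₀ G U)
    (hunif : ∀ ε : ℝ, 0 < ε → ∃ d : ℝ, 0 < d ∧ ∀ μ ∈ U, ∀ ν ∈ U,
      Wp p μ ν < d → Wp p (G μ) (G ν) < ε)
    {ε : ℕ → ℝ} (hε : Tendsto ε atTop (𝓝 0)) (hFG : ∀ n, ∀ μ ∈ B, Wp p (G μ) (F n μ) ≤ ε n) :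
    WpSeqAdmissible p x₀ F B := by
  have : Fact (1 ≤ p) := ⟨hp⟩
  let B' : Set (WassersteinSpace p x₀) := (↑) ⁻¹' B
  let U' : Set (WassersteinSpace p x₀) := (↑) ⁻¹' U
  have hBU_thickening : thickening δ B' ⊆ U' := fun μ hμ =>
    have ⟨ν, hν, hμν⟩ := mem_thickening_iff.1 hμ
    hBU μ μ.2 ν hν hμν
  have hG_unif : UniformContinuousOn hG.restrict U' := by
    refine Metric.uniformContinuousOn_iff.2 fun η hη => ?_
    obtain ⟨d, hd, h⟩ := hunif η hη
    exact ⟨d, hd, fun μ hμ ν hν => h μ hμ ν hν⟩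
  have hFG_unif : TendstoUniformlyOn (fun n => (hF n).restrict) hG.restrict atTop B' :=
    Metric.tendstoUniformlyOn_iff.2 fun η hη =>
      (hε.eventually_lt_const hη).mono fun n hn μ hμ => (hFG n μ hμ).trans_lt hn
  exact SeqAdmissible.wpSeqAdmissible hB <| .of_tendstoUniformlyOn hδ hBU_thickening
    (hU_adm.seqAdmissible_restrict fun _ => hG) hG_unif hFG_unif

/-- If `B ⊆ P₁(X)` is closed and bounded, `U` is a `δ`-neighborhood of `B` whose closure is
`f_*`-admissible, `f_*` is uniformly `w₁`-continuous on `U`, and `Fₙ → f_*` uniformly on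
`U`, then `B` is `{Fₙ}`-admissible. -/
theorem uniform_perturbation_admissible
    [MetricSpace X] [MeasurableSpace X] [BorelSpace X] [ProperSpace X] [CompleteSpace X]
    [TopologicalSpace.SeparableSpace X] (x₀ : X) (f : X → X) (hf : Continuous f)
    (hmap : ∀ μ ∈ Pp 1 x₀, μ.map f ∈ Pp 1 x₀)
    (hcont : ∀ (μs : ℕ → Measure X) (μ : Measure X), (∀ n, μs n ∈ Pp 1 x₀) → μ ∈ Pp 1 x₀ →
      WpTendsto 1 μs μ → WpTendsto 1 (fun n => (μs n).map f) (μ.map f))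
    (B : Set (Measure X)) (hB_closed : WpClosed 1 x₀ B) (hB_bdd : WpBounded 1 x₀ B)
    (δ : ℝ) (hδ : 0 < δ)
    (U : Set (Measure X))
    (hU : U = {μ : Measure X | μ ∈ Pp 1 x₀ ∧ ∃ ν ∈ B, Wp 1 μ ν < δ})
    (hU_adm : WpAdmissible 1 x₀ (fun μ : Measure X => μ.map f) (WpClosure 1 x₀ U))
    (hunif : ∀ ε : ℝ, 0 < ε → ∃ d : ℝ, 0 < d ∧ ∀ μ ∈ U, ∀ ν ∈ U,
      Wp 1 μ ν < d → Wp 1 (μ.map f) (ν.map f) < ε)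
    (F : ℕ → Measure X → Measure X)
    (hFmap : ∀ n, ∀ μ ∈ Pp 1 x₀, F n μ ∈ Pp 1 x₀)
    (hFcont : ∀ n, ∀ (μs : ℕ → Measure X) (μ : Measure X), (∀ k, μs k ∈ Pp 1 x₀) →
      μ ∈ Pp 1 x₀ → WpTendsto 1 μs μ → WpTendsto 1 (fun k => F n (μs k)) (F n μ))
    (ε : ℕ → ℝ) (hε : Tendsto ε atTop (𝓝 0))
    (hFconv : ∀ n, ∀ μ ∈ U, Wp 1 (μ.map f) (F n μ) ≤ ε n) :
    WpSeqAdmissible 1 x₀ F B := by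
  have hUP : U ⊆ Pp 1 x₀ := fun _ hμ => (hU ▸ hμ).1
  have hBU : ∀ μ ∈ Pp 1 x₀, ∀ ν ∈ B, Wp 1 μ ν < δ → μ ∈ U :=
    fun μ hμ ν hν hμν => hU ▸ ⟨hμ, ν, hν, hμν⟩
  have hB_sub : B ⊆ U := fun μ hμ =>
    have := (hB_closed.1 hμ).1
    hBU μ (hB_closed.1 hμ) μ hμ ((wp_self one_pos μ).trans_lt hδ)
  exact uniform_perturbation_admissible_general le_rfl hmap hFmap hB_closed.1 hδ hBU
    (hU_adm.mono (subset_wpClosure one_pos hUP)) hunif hε fun n μ hμ => hFconv n μ (hB_sub hμ)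
end
end
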